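/- arXiv:1908.04714 — 8 statements merged into one kernel-verified Lean document; each statement's English description precedes it below -/
import Mathlib

section
/- Assume μ > 0 and r_{−1} > 0, and let θ denote the smallest root of r̃(z) = 1 in (0,1]. Then the map (0,∞) ∋ q ↦ θ_q is a continuous, strictly decreasing bijection from (0,∞) onto (0,θ), with θ = lim_{q↓0} θ_q; moreover, for every q ∈ (0,∞), q + μ(1 − r̃(z)) > 0 for all z ∈ (θ_q, 1] and q + μ(1 − r̃(z)) < 0 for all z ∈ (0, θ_q). -/
open MeasureTheory Filter Set

/-- The probability generating function of the offspring distribution `p`. -/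
noncomputable def ptilde (p : ℕ → ℝ) (z : ℝ) : ℝ := ∑' k, p k * z ^ k

/-- The p.g.f. of the immigration/culling mechanism: `rneg` is `r_{-1}`,
`r k` for `k ≥ 1` are the immigration probabilities (we require `r 0 = 0`). -/
noncomputable def rtilde (rneg : ℝ) (r : ℕ → ℝ) (z : ℝ) : ℝ :=
  rneg / z + ∑' k, r k * z ^ k

/-- `f : ℕ → ℝ` is `q`-harmonic for the branching process with branching mechanism `p`
(rate `lam`) and immigration/culling mechanism `(rneg, r)` (rate `mu`). -/
def IsQHarmonic (lam mu q : ℝ) (p : ℕ → ℝ) (rneg : ℝ) (r : ℕ → ℝ) (f : ℕ → ℝ) : Prop :=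
  ∀ x : ℕ, 1 ≤ x →
    (q + lam * x + mu) * f x
      = lam * x * (∑' k, p k * f (x + k - 1))
        + mu * (rneg * f (x - 1) + ∑' k, r k * f (x + k))

/-- The harmonic function `Φ_q`; `φ` is the smallest fixed point of `ptilde p` in `(0,1]`
and `θ` is the delimiter `θ_q`. -/
noncomputable def Phi (lam mu : ℝ) (p : ℕ → ℝ) (rneg : ℝ) (r : ℕ → ℝ)
    (φ θ q : ℝ) (x : ℕ) : ℝ :=
  q * ∫ v in (0:ℝ)..φ,
      Real.exp (-∫ w in θ..v,
          (q + mu * (1 - rtilde rneg r w)) / (lam * |ptilde p w - w|))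
        / (lam * |ptilde p v - v|) * v ^ x

/-- The harmonic function `Ψ_q`. -/
noncomputable def Psi (lam mu : ℝ) (p : ℕ → ℝ) (rneg : ℝ) (r : ℕ → ℝ)
    (φ q : ℝ) (x : ℕ) : ℝ :=
  1 - q * ∫ v in φ..(1:ℝ),
      Real.exp (-∫ w in v..(1:ℝ),
          (q + mu * (1 - rtilde rneg r w)) / (lam * |ptilde p w - w|))
        / (lam * |ptilde p v - v|) * v ^ x

/-- Condition (E'): `∫_v^1 dz/(z - ptilde p z) < ∞` for some `v ∈ (φ, 1)`. -/
def CondE (p : ℕ → ℝ) (φ : ℝ) : Prop :=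
  ∃ v, φ < v ∧ v < 1 ∧
    IntervalIntegrable (fun z => 1 / (z - ptilde p z)) MeasureTheory.volume v 1

theorem aux_main (mu rneg : ℝ) (F : ℝ → ℝ) (θf : ℝ → ℝ) (θ : ℝ)
    (hmu : 0 < mu) (hrneg : 0 < rneg)
    (hF : ConvexOn ℝ (Set.Ioc (0:ℝ) 1) F) (hFc : ContinuousOn F (Set.Ioc (0:ℝ) 1))
    (hF1 : F 1 = 1) (hFge : ∀ z ∈ Set.Ioc (0:ℝ) 1, rneg / z ≤ F z)
    (hθf : ∀ q : ℝ, 0 < q →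
      θf q ∈ Set.Ioo (0:ℝ) 1 ∧ q = mu * (F (θf q) - 1))
    (hθmem : θ ∈ Set.Ioc (0:ℝ) 1) (hθroot : F θ = 1)
    (hθmin : ∀ z ∈ Set.Ioc (0:ℝ) 1, F z = 1 → θ ≤ z) :
    ContinuousOn θf (Set.Ioi 0) ∧
    StrictAntiOn θf (Set.Ioi 0) ∧
    Set.BijOn θf (Set.Ioi 0) (Set.Ioo 0 θ) ∧
    Filter.Tendsto θf (nhdsWithin 0 (Set.Ioi 0)) (nhds θ) ∧
    (∀ q : ℝ, 0 < q → ∀ z : ℝ, θf q < z → z ≤ 1 →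
      0 < q + mu * (1 - F z)) ∧
    (∀ q : ℝ, 0 < q → ∀ z : ℝ, 0 < z → z < θf q →
      q + mu * (1 - F z) < 0) := by
  obtain ⟨hθ0, hθ1⟩ := hθmem
  -- above
  have hlt : ∀ x, 0 < x → x < θ → 1 < F x := by
    intro x hx0 hxθ
    by_contra hcon
    push Not at hcon
    have hm : 0 < min x rneg := lt_min hx0 hrneg
    have hz0 : 0 < min x rneg / 2 := by positivity
    have hzx : min x rneg / 2 ≤ x := by linarith [min_le_left x rneg]
    have h2 : 1 ≤ F (min x rneg / 2) := by
      refine le_trans ?_ (hFge _ ⟨hz0, by linarith⟩)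
      rw [le_div_iff₀ hz0]
      linarith [min_le_right x rneg]
    have hc : ContinuousOn F (Set.Icc (min x rneg / 2) x) :=
      hFc.mono fun y hy => ⟨lt_of_lt_of_le hz0 hy.1, by linarith [hy.2]⟩
    obtain ⟨y, hy, hy1⟩ := intermediate_value_Icc' hzx hc ⟨hcon, h2⟩
    have := hθmin y ⟨lt_of_lt_of_le hz0 hy.1, by linarith [hy.2]⟩ hy1
    linarith [hy.2]
  have hge : ∀ x, θ ≤ x → x ≤ 1 → F x ≤ 1 := by
    intro x h1 h2
    have := hF.le_max_of_mem_Icc (x := θ) (y := 1) (z := x) ⟨hθ0, hθ1⟩ ⟨one_pos, le_rfl⟩ ⟨h1, h2⟩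
    simpa [hθroot, hF1] using this
  have hanti : StrictAntiOn F (Set.Ioc 0 θ) := by
    intro x hx y hy hxy
    rcases eq_or_lt_of_le hy.2 with h | h
    · subst h
      rw [hθroot]
      exact hlt x hx.1 hxy
    · have h1 := hlt y hy.1 h
      have := hF.slope_mono_adjacent (x := x) (y := y) (z := θ) ⟨hx.1, by linarith⟩
        ⟨hθ0, hθ1⟩ hxy h
      have h3 : (F θ - F y) / (θ - y) < 0 := div_neg_of_neg_of_pos (by linarith) (by linarith)
      have h4 : (F y - F x) / (y - x) < 0 := lt_of_le_of_lt this h3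
      rw [div_neg_iff] at h4
      rcases h4 with h4 | h4 <;> linarith [h4.1, h4.2]
  have hFq : ∀ q, 0 < q → F (θf q) = 1 + q / mu := by
    intro q hq
    have := (hθf q hq).2
    field_simp
    linarith
  have hmem : ∀ q, 0 < q → θf q ∈ Set.Ioo 0 θ := by
    intro q hq
    refine ⟨(hθf q hq).1.1, ?_⟩
    by_contra h
    push Not at h
    have h1 := hge _ h (hθf q hq).1.2.le
    have h2 := hFq q hq
    have : 0 < q / mu := by positivity
    linarith
  have hmem' : ∀ q, 0 < q → θf q ∈ Set.Ioc 0 θ := fun q hq => ⟨(hmem q hq).1, (hmem q hq).2.le⟩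
  have hsa : StrictAntiOn θf (Set.Ioi 0) := by
    intro a ha b hb hab
    rw [← hanti.lt_iff_gt (hmem' a ha) (hmem' b hb), hFq a ha, hFq b hb]
    have : a / mu < b / mu := by gcongr
    linarith
  have hsurj : ∀ z ∈ Set.Ioo 0 θ, ∃ q, 0 < q ∧ θf q = z := by
    intro z hz
    have hq : 0 < mu * (F z - 1) := mul_pos hmu (by linarith [hlt z hz.1 hz.2])
    refine ⟨_, hq, ?_⟩
    apply hanti.injOn (hmem' _ hq) ⟨hz.1, hz.2.le⟩
    rw [hFq _ hq]
    field_simp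
    ring
  refine ⟨?_, hsa, ⟨fun q hq => hmem q hq, hsa.injOn, fun z hz => ?_⟩, ?_, ?_, ?_⟩
  · intro q hq
    refine tendsto_order.2 ⟨fun a ha => ?_, fun a ha => ?_⟩
    · obtain ⟨z, hz1, hz2⟩ := exists_between (max_lt ha (hmem q hq).1)
      obtain ⟨p, hp, rfl⟩ := hsurj z ⟨lt_of_le_of_lt (le_max_right _ _) hz1, hz2.trans (hmem q hq).2⟩
      have hqp : q < p := (hsa.lt_iff_gt hp hq).1 hz2
      filter_upwards [self_mem_nhdsWithin, mem_nhdsWithin_of_mem_nhds (Iio_mem_nhds hqp)] with s hs hs2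
      have := hsa hs hp hs2
      exact (lt_of_le_of_lt (le_max_left _ _) hz1).trans this
    · obtain ⟨z, hz1, hz2⟩ := exists_between (lt_min ha (hmem q hq).2)
      obtain ⟨p, hp, rfl⟩ := hsurj z ⟨(hmem q hq).1.trans hz1, lt_of_lt_of_le hz2 (min_le_right _ _)⟩
      have hqp : p < q := (hsa.lt_iff_gt hq hp).1 hz1
      filter_upwards [self_mem_nhdsWithin, mem_nhdsWithin_of_mem_nhds (Ioi_mem_nhds hqp)] with s hs hs2
      have := hsa hp hs hs2
      exact this.trans (lt_of_lt_of_le hz2 (min_le_left _ _))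
  · obtain ⟨q, hq, h⟩ := hsurj z hz
    exact ⟨q, hq, h⟩
  · refine tendsto_order.2 ⟨fun a ha => ?_, fun a ha => ?_⟩
    · obtain ⟨z, hz1, hz2⟩ := exists_between (max_lt ha hθ0)
      obtain ⟨p, hp, rfl⟩ := hsurj z ⟨lt_of_le_of_lt (le_max_right _ _) hz1, hz2⟩
      filter_upwards [self_mem_nhdsWithin, mem_nhdsWithin_of_mem_nhds (Iio_mem_nhds hp)] with s hs hs2
      have := hsa hs hp hs2
      exact (lt_of_le_of_lt (le_max_left _ _) hz1).trans this
    · filter_upwards [self_mem_nhdsWithin] with s hs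
      exact (hmem s hs).2.trans ha
  · intro q hq z hz hz1
    have h0 := (hθf q hq).2
    have : F z < F (θf q) := by
      rcases le_or_gt z θ with h | h
      · exact hanti (hmem' q hq) ⟨(hmem q hq).1.trans hz, h⟩ hz
      · exact lt_of_le_of_lt (hge z h.le hz1) (hlt _ (hmem q hq).1 (hmem q hq).2)
    have := mul_lt_mul_of_pos_left this hmu
    linarith
  · intro q hq z hz hz1
    have h0 := (hθf q hq).2
    have : F (θf q) < F z := hanti ⟨hz, (hz1.trans (hmem q hq).2).le⟩ (hmem' q hq) hz1
    have := mul_lt_mul_of_pos_left this hmu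
    linarith

theorem aux_inv (rneg : ℝ) (h : 0 < rneg) :
    ConvexOn ℝ (Set.Ioc (0:ℝ) 1) (fun z => rneg / z) := by
  have h1 : ConvexOn ℝ (Set.Ioi (0:ℝ)) fun z : ℝ => z ^ (-1 : ℤ) := convexOn_zpow (-1)
  have h2 := (h1.subset (s := Set.Ioc (0:ℝ) 1) (fun x hx => hx.1) (convex_Ioc 0 1)).smul h.le
  refine h2.congr fun z hz => ?_
  simp [div_eq_mul_inv]

theorem aux_summ (r : ℕ → ℝ) (hr : ∀ k, 0 ≤ r k) (a b : ℝ) (ha : 0 ≤ a) (hab : a ≤ b)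
    (hs : Summable fun k => r k * b ^ k) : Summable fun k => r k * a ^ k :=
  Summable.of_nonneg_of_le (fun k => mul_nonneg (hr k) (pow_nonneg ha k))
    (fun k => mul_le_mul_of_nonneg_left (pow_le_pow_left₀ ha hab k) (hr k)) hs

theorem aux_conv (r : ℕ → ℝ) (hr : ∀ k, 0 ≤ r k) (hs : Summable r) :
    ConvexOn ℝ (Set.Ioc (0:ℝ) 1) (fun z => ∑' k, r k * z ^ k) := by
  have hsz : ∀ z ∈ Set.Ioc (0:ℝ) 1, Summable fun k => r k * z ^ k := fun z hz =>
    aux_summ r hr z 1 hz.1.le hz.2 (by simpa using hs)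
  refine ⟨convex_Ioc 0 1, fun x hx y hy a b ha hb hab => ?_⟩
  have hm := convex_Ioc (0:ℝ) 1 hx hy ha hb hab
  simp only [smul_eq_mul] at hm ⊢
  rw [← tsum_mul_left, ← tsum_mul_left, ← ((hsz x hx).mul_left a).tsum_add ((hsz y hy).mul_left b)]
  refine Summable.tsum_le_tsum (fun k => ?_) (hsz _ hm)
    (((hsz x hx).mul_left a).add ((hsz y hy).mul_left b))
  have := (convexOn_pow (𝕜 := ℝ) k).2 (x := x) hx.1.le (y := y) hy.1.le ha hb hab
  simp only [smul_eq_mul] at this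
  have := mul_le_mul_of_nonneg_left this (hr k)
  linarith

theorem aux_cont (r : ℕ → ℝ) (hr : ∀ k, 0 ≤ r k) (hs : Summable r) :
    ContinuousOn (fun z => ∑' k, r k * z ^ k) (Set.Ioc (0:ℝ) 1) := by
  refine continuousOn_tsum (fun k => by fun_prop) hs fun k z hz => ?_
  rw [Real.norm_of_nonneg (mul_nonneg (hr k) (pow_nonneg hz.1.le k))]
  exact mul_le_of_le_one_right (hr k) (pow_le_one₀ hz.1.le hz.2)

theorem aux_divcont (rneg : ℝ) : ContinuousOn (fun z => rneg / z) (Set.Ioc (0:ℝ) 1) :=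
  continuousOn_const.div continuousOn_id fun z hz => hz.1.ne'

/-- If `r` is not summable, the hypotheses force all the series to diverge. -/
theorem aux_junk (mu : ℝ) (r : ℕ → ℝ) (θf : ℝ → ℝ) (hmu : 0 < mu) (hr : ∀ k, 0 ≤ r k)
    (hns : ¬ Summable r)
    (hθf : ∀ q : ℝ, 0 < q →
      θf q ∈ Set.Ioo (0:ℝ) 1 ∧ q = mu * (rtilde 1 r (θf q) - 1)) :
    ∀ z, 0 < z → ¬ Summable fun k => r k * z ^ k := by
  intro z0 hz0 hsz0
  obtain ⟨k, hk⟩ : ∃ k, 0 < r k := by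
    by_contra h
    push Not at h
    apply hns
    have : r = fun _ => 0 := funext fun k => le_antisymm (h k) (hr k)
    rw [this]
    exact summable_zero
  set D : Set ℝ := {z | 0 < z ∧ Summable fun k => r k * z ^ k} with hD
  have hub : ∀ z ∈ D, z ≤ 1 := by
    intro z hz
    by_contra h
    push Not at h
    exact hns (by simpa using aux_summ r hr 1 z zero_le_one h.le hz.2)
  have hbdd : BddAbove D := ⟨1, hub⟩
  set R := sSup D
  have hR0 : 0 < R := lt_of_lt_of_le hz0 (le_csSup hbdd ⟨hz0, hsz0⟩)
  have hR1 : R ≤ 1 := csSup_le ⟨z0, hz0, hsz0⟩ hub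
  have hRinv : 1 ≤ 1 / R := by rw [le_div_iff₀ hR0]; linarith
  set δ := min (1 / R) (r k * (R / 2) ^ k) with hδ
  have hδ0 : 0 < δ := lt_min (by positivity) (by positivity)
  have hq : 0 < mu * (1 / R + δ / 2 - 1) := mul_pos hmu (by linarith)
  obtain ⟨hz, he⟩ := hθf _ hq
  set z := θf (mu * (1 / R + δ / 2 - 1))
  have he := mul_left_cancel₀ hmu.ne' he
  unfold rtilde at he
  by_cases hs : Summable fun k => r k * z ^ k
  · have hzR : z ≤ R := le_csSup hbdd ⟨hz.1, hs⟩
    have h1 : r k * z ^ k ≤ ∑' k, r k * z ^ k :=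
      hs.le_tsum k fun j _ => mul_nonneg (hr j) (pow_nonneg hz.1.le j)
    have h0 : 0 ≤ r k * z ^ k := mul_nonneg (hr k) (pow_nonneg hz.1.le k)
    rcases le_or_gt z (R / 2) with h | h
    · have h3 : 1 / (R / 2) ≤ 1 / z := one_div_le_one_div_of_le hz.1 h
      have h4 : 1 / (R / 2) = 2 * (1 / R) := by field_simp
      have h5 : δ ≤ 1 / R := min_le_left _ _
      linarith
    · have h3 : 1 / R ≤ 1 / z := one_div_le_one_div_of_le hz.1 hzR
      have h4 : r k * (R / 2) ^ k ≤ r k * z ^ k :=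
        mul_le_mul_of_nonneg_left (pow_le_pow_left₀ (by positivity) h.le k) (hr k)
      have h5 : δ ≤ r k * (R / 2) ^ k := min_le_right _ _
      linarith
  · rw [tsum_eq_zero_of_not_summable hs] at he
    have hRz : R ≤ z := by
      refine csSup_le ⟨z0, hz0, hsz0⟩ fun w hw => ?_
      by_contra h
      push Not at h
      exact hs (aux_summ r hr z w hz.1.le h.le hw.2)
    have h3 : 1 / z ≤ 1 / R := one_div_le_one_div_of_le hR0 hRz
    linarith

/-- with `μ > 0`, `r_{-1} > 0` and `θ` the smallest root of `r̃(z) = 1` in `(0,1]`,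
the map `q ↦ θ_q` is a continuous, strictly decreasing bijection from `(0,∞)` onto `(0,θ)`,
with `θ = lim_{q↓0} θ_q`; moreover `q + μ(1 - r̃(z)) > 0` for `z ∈ (θ_q, 1]` and
`q + μ(1 - r̃(z)) < 0` for `z ∈ (0, θ_q)`. -/
theorem stmt1 (mu rneg : ℝ) (r : ℕ → ℝ) (θf : ℝ → ℝ) (θ : ℝ)
    (hmu : 0 < mu) (hrneg : 0 < rneg)
    (hr : ∀ k, 0 ≤ r k) (hr0 : r 0 = 0)
    (hrsum : rneg + ∑' k, r k = 1)
    -- `θf q` is the unique root in `(0,1)` of `q = μ(r̃(z) - 1)`, for `q > 0`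
    (hθf : ∀ q : ℝ, 0 < q →
      θf q ∈ Set.Ioo (0:ℝ) 1 ∧ q = mu * (rtilde rneg r (θf q) - 1))
    -- `θ` is the smallest root of `r̃(z) = 1` in `(0,1]`
    (hθmem : θ ∈ Set.Ioc (0:ℝ) 1) (hθroot : rtilde rneg r θ = 1)
    (hθmin : ∀ z ∈ Set.Ioc (0:ℝ) 1, rtilde rneg r z = 1 → θ ≤ z) :
    ContinuousOn θf (Set.Ioi 0) ∧
    StrictAntiOn θf (Set.Ioi 0) ∧
    Set.BijOn θf (Set.Ioi 0) (Set.Ioo 0 θ) ∧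
    Filter.Tendsto θf (nhdsWithin 0 (Set.Ioi 0)) (nhds θ) ∧
    (∀ q : ℝ, 0 < q → ∀ z : ℝ, θf q < z → z ≤ 1 →
      0 < q + mu * (1 - rtilde rneg r z)) ∧
    (∀ q : ℝ, 0 < q → ∀ z : ℝ, 0 < z → z < θf q →
      q + mu * (1 - rtilde rneg r z) < 0) := by
  have hF1ge : ∀ z ∈ Set.Ioc (0:ℝ) 1, rneg / z ≤ rtilde rneg r z := fun z hz =>
    le_add_of_nonneg_right (tsum_nonneg fun k => mul_nonneg (hr k) (pow_nonneg hz.1.le k))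
  by_cases hs : Summable r
  · exact aux_main mu rneg (rtilde rneg r) θf θ hmu hrneg
      ((aux_inv rneg hrneg).add (aux_conv r hr hs))
      ((aux_divcont rneg).add (aux_cont r hr hs))
      (by simpa [rtilde] using hrsum) hF1ge hθf hθmem hθroot hθmin
  · rw [tsum_eq_zero_of_not_summable hs, add_zero] at hrsum
    subst hrsum
    have hj := aux_junk mu r θf hmu hr hs hθf
    have hE : Set.EqOn (fun z : ℝ => 1 / z) (rtilde 1 r) (Set.Ioc 0 1) := fun z hz => by
      simp [rtilde, tsum_eq_zero_of_not_summable (hj z hz.1)]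
    exact aux_main mu 1 (rtilde 1 r) θf θ hmu hrneg
      ((aux_inv 1 hrneg).congr hE)
      ((aux_divcont 1).congr hE.symm)
      (by rw [← hE ⟨one_pos, le_rfl⟩]; norm_num) hF1ge hθf hθmem hθroot hθmin
end

section
/- For every q̄ ∈ (0,∞), the equation (λ + q̄)/λ = p̃(z)/z has a unique root φ*_{q̄} in the open interval (0,1); the map (0,∞) ∋ q̄ ↦ φ*_{q̄} is a continuous, strictly decreasing bijection from (0,∞) onto (0, φ*); and φ* = lim_{q̄↓0} φ*_{q̄}. -/
open MeasureTheory Filter Set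

lemma aux_summ_s2 (p : ℕ → ℝ) (hp : ∀ k, 0 ≤ p k) (hs : Summable p) (z : ℝ)
    (h0 : 0 ≤ z) (h1 : z ≤ 1) : Summable (fun k => p k * z ^ k) :=
  Summable.of_nonneg_of_le (fun k => mul_nonneg (hp k) (pow_nonneg h0 k))
    (fun k => mul_le_of_le_one_right (hp k) (pow_le_one₀ h0 h1)) hs

lemma aux_cont_s2 (p : ℕ → ℝ) (hp : ∀ k, 0 ≤ p k) (hs : Summable p) :
    ContinuousOn (ptilde p) (Set.Icc 0 1) := by
  unfold ptilde
  refine continuousOn_tsum (u := p) (fun k => by fun_prop) hs ?_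
  intro k z hz
  rw [Real.norm_of_nonneg (mul_nonneg (hp k) (pow_nonneg hz.1 k))]
  exact mul_le_of_le_one_right (hp k) (pow_le_one₀ hz.1 hz.2)

lemma aux_conv_s2 (p : ℕ → ℝ) (hp : ∀ k, 0 ≤ p k) (hs : Summable p) (x y a b : ℝ)
    (hx : x ∈ Set.Icc (0:ℝ) 1) (hy : y ∈ Set.Icc (0:ℝ) 1) (ha : 0 ≤ a) (hb : 0 ≤ b)
    (hab : a + b = 1) :
    ptilde p (a * x + b * y) ≤ a * ptilde p x + b * ptilde p y := by
  unfold ptilde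
  have sx := (aux_summ_s2 p hp hs x hx.1 hx.2).mul_left a
  have sy := (aux_summ_s2 p hp hs y hy.1 hy.2).mul_left b
  rw [← tsum_mul_left, ← tsum_mul_left, ← sx.tsum_add sy]
  refine Summable.tsum_le_tsum (fun k => ?_) (aux_summ_s2 p hp hs _ ?_ ?_) (sx.add sy)
  · have := (convexOn_pow (𝕜 := ℝ) k).2 (x := x) (y := y) hx.1 hy.1 ha hb hab
    simp only [smul_eq_mul] at this
    have := mul_le_mul_of_nonneg_left this (hp k)
    linarith
  · have := mul_nonneg ha hx.1
    have := mul_nonneg hb hy.1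
    linarith
  · have := mul_le_mul_of_nonneg_left hx.2 ha
    have := mul_le_mul_of_nonneg_left hy.2 hb
    linarith

lemma aux_p0 (p : ℕ → ℝ) (hp : ∀ k, 0 ≤ p k) (hs : Summable p) (z : ℝ)
    (h0 : 0 ≤ z) (h1 : z ≤ 1) : p 0 ≤ ptilde p z := by
  have := (aux_summ_s2 p hp hs z h0 h1).le_tsum 0
    (fun k _ => mul_nonneg (hp k) (pow_nonneg h0 k))
  simpa [ptilde] using this

/-- for every `q̄ ∈ (0,∞)` the equation `(λ + q̄)/λ = p̃(z)/z` has a unique root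
`φ*_{q̄} ∈ (0,1)`; the map `q̄ ↦ φ*_{q̄}` is a continuous strictly decreasing bijection from
`(0,∞)` onto `(0, φ*)`, and `φ* = lim_{q̄↓0} φ*_{q̄}`. -/
theorem stmt2 (lam : ℝ) (p : ℕ → ℝ) (φ : ℝ)
    (hlam : 0 < lam)
    (hp : ∀ k, 0 ≤ p k) (hpsum : ∑' k, p k = 1) (hp0 : 0 < p 0) (hp1 : p 1 = 0)
    (hφ0 : 0 < φ) (hφ1 : φ ≤ 1) (hφfix : ptilde p φ = φ)
    (hφlo : ∀ z : ℝ, 0 < z → z < φ → z < ptilde p z)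
    (hφhi : ∀ z : ℝ, φ < z → z < 1 → ptilde p z < z) :
    ∃ φq : ℝ → ℝ,
      (∀ qb : ℝ, 0 < qb →
        (φq qb ∈ Set.Ioo (0:ℝ) 1 ∧ (lam + qb) / lam = ptilde p (φq qb) / φq qb) ∧
        (∀ z ∈ Set.Ioo (0:ℝ) 1, (lam + qb) / lam = ptilde p z / z → z = φq qb)) ∧
      ContinuousOn φq (Set.Ioi 0) ∧
      StrictAntiOn φq (Set.Ioi 0) ∧
      Set.BijOn φq (Set.Ioi 0) (Set.Ioo 0 φ) ∧
      Filter.Tendsto φq (nhdsWithin 0 (Set.Ioi 0)) (nhds φ) := by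
  have hs : Summable p := by
    by_contra h
    rw [tsum_eq_zero_of_not_summable h] at hpsum
    norm_num at hpsum
  set H : ℝ → ℝ := fun z => lam * (ptilde p z / z - 1) with hH
  have heq : ∀ q z : ℝ, (lam + q) / lam = ptilde p z / z ↔ H z = q := by
    intro q z
    simp only [hH]
    rw [add_div, div_self hlam.ne']
    constructor
    · intro h
      rw [← h]
      field_simp
      ring
    · intro h
      rw [← h]
      field_simp
      ring
  have hHφ : H φ = 0 := by simp [hH, hφfix, hφ0.ne']
  have hHanti : StrictAntiOn H (Set.Ioc 0 φ) := by
    intro z hz w hw hzw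
    have hzφ : z < φ := lt_of_lt_of_le hzw hw.2
    have hd : 0 < φ - z := by linarith
    have hc := aux_conv_s2 p hp hs z φ ((φ - w) / (φ - z)) ((w - z) / (φ - z))
      ⟨hz.1.le, by linarith⟩ ⟨hφ0.le, hφ1⟩ (div_nonneg (by linarith [hw.2]) hd.le)
      (div_nonneg (by linarith) hd.le) (by field_simp; ring)
    have e : (φ - w) / (φ - z) * z + (w - z) / (φ - z) * φ = w := by
      field_simp; ring
    rw [e, hφfix] at hc
    set a := (φ - w) / (φ - z)
    have hb : 0 < (w - z) / (φ - z) := div_pos (by linarith) hd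
    set b := (w - z) / (φ - z)
    have h1 := hφlo z hz.1 hzφ
    have h2 := mul_le_mul_of_nonneg_left hc hz.1.le
    have h3 := mul_lt_mul_of_pos_left h1 (mul_pos hb hφ0)
    have h4 : (a * z + b * φ) * ptilde p z = w * ptilde p z := by rw [e]
    have : ptilde p w / w < ptilde p z / z := by
      rw [div_lt_div_iff₀ hw.1 hz.1]
      nlinarith
    exact mul_lt_mul_of_pos_left (by linarith) hlam
  have hHcont : ContinuousOn H (Set.Ioc 0 φ) := by
    have : ContinuousOn (ptilde p) (Set.Ioc 0 φ) :=
      (aux_cont_s2 p hp hs).mono (fun z hz => ⟨hz.1.le, hz.2.trans hφ1⟩)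
    exact continuousOn_const.mul
      ((this.div continuousOn_id (fun z hz => hz.1.ne')).sub continuousOn_const)
  have hHpos : ∀ z ∈ Set.Ioo 0 φ, 0 < H z := by
    intro z hz
    rw [← hHφ]
    exact hHanti ⟨hz.1, hz.2.le⟩ ⟨hφ0, le_rfl⟩ hz.2
  have hsurj : ∀ q : ℝ, 0 < q → ∃ z ∈ Set.Ioo 0 φ, H z = q := by
    intro q hq
    have hc : 0 < q / lam + 1 := by positivity
    set c := min φ (p 0 / (q / lam + 1)) with hcdef
    have hc0 : 0 < c := lt_min hφ0 (div_pos hp0 hc)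
    have hcφ : c ≤ φ := min_le_left _ _
    have hqc : q ≤ H c := by
      have h1 : c * (q / lam + 1) ≤ p 0 := by
        rw [← le_div_iff₀ hc]; exact min_le_right _ _
      have h2 := aux_p0 p hp hs c hc0.le (hcφ.trans hφ1)
      have h3 : q / lam + 1 ≤ ptilde p c / c := by
        rw [le_div_iff₀ hc0]; linarith
      have h4 := mul_le_mul_of_nonneg_left (show q / lam ≤ ptilde p c / c - 1 by linarith) hlam.le
      rwa [mul_div_cancel₀ _ hlam.ne'] at h4
    obtain ⟨z, hz, hzq⟩ := intermediate_value_Icc' hcφ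
      (hHcont.mono (fun x hx => ⟨lt_of_lt_of_le hc0 hx.1, hx.2⟩))
      (show q ∈ Set.Icc (H φ) (H c) from ⟨by rw [hHφ]; exact hq.le, hqc⟩)
    refine ⟨z, ⟨lt_of_lt_of_le hc0 hz.1, lt_of_le_of_ne hz.2 ?_⟩, hzq⟩
    rintro rfl
    linarith
  have hroot : ∀ z ∈ Set.Ioo (0:ℝ) 1, 0 < H z → z < φ := by
    intro z hz hpos
    by_contra hcon
    push Not at hcon
    rcases hcon.eq_or_lt with h | h
    · rw [← h, hHφ] at hpos
      exact lt_irrefl _ hpos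
    · have h1 := hφhi z h hz.2
      have h2 : ptilde p z / z < 1 := by rwa [div_lt_one hz.1]
      have h3 := mul_neg_of_pos_of_neg hlam (show ptilde p z / z - 1 < 0 by linarith)
      linarith
  choose! f hf hHf using hsurj
  have hfanti : StrictAntiOn f (Set.Ioi 0) := by
    intro x hx y hy hxy
    by_contra hcon
    push Not at hcon
    have := hHanti.antitoneOn ⟨(hf x hx).1, (hf x hx).2.le⟩ ⟨(hf y hy).1, (hf y hy).2.le⟩ hcon
    rw [hHf x hx, hHf y hy] at this
    linarith
  have hinv : ∀ z ∈ Set.Ioo 0 φ, f (H z) = z := by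
    intro z hz
    have h := hHpos z hz
    exact hHanti.injOn ⟨(hf _ h).1, (hf _ h).2.le⟩ ⟨hz.1, hz.2.le⟩ (hHf _ h)
  have hbij : Set.BijOn f (Set.Ioi 0) (Set.Ioo 0 φ) :=
    ⟨fun q hq => hf q hq, hfanti.injOn, fun z hz => ⟨H z, hHpos z hz, hinv z hz⟩⟩
  refine ⟨f, ?_, ?_, hfanti, hbij, ?_⟩
  · intro q hq
    refine ⟨⟨⟨(hf q hq).1, (hf q hq).2.trans_le hφ1⟩, (heq _ _).2 (hHf q hq)⟩, ?_⟩
    intro z hz h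
    have h := (heq _ _).1 h
    have hzφ := hroot z hz (by rw [h]; exact hq)
    rw [← h, hinv z ⟨hz.1, hzφ⟩]
  · intro q hq
    have hmono : StrictMonoOn (fun x => - f x) (Set.Ioi 0) := hfanti.neg
    have himg : (fun x => - f x) '' Set.Ioi 0 = Set.Ioo (-φ) 0 := by
      rw [show (fun x => - f x) = Neg.neg ∘ f from rfl, Set.image_comp, hbij.image_eq]
      simp
    have hca : ContinuousAt (fun x => - f x) q := by
      refine hmono.continuousAt_of_image_mem_nhds (Ioi_mem_nhds hq) ?_
      rw [himg]
      have := hf q hq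
      exact Ioo_mem_nhds (by linarith [this.2]) (by linarith [this.1])
    have : ContinuousAt (fun x => - - f x) q := hca.neg
    simp only [neg_neg] at this
    exact this.continuousWithinAt
  · rw [tendsto_order]
    constructor
    · intro a ha
      have hz : max a (φ / 2) < φ := max_lt ha (by linarith)
      obtain ⟨z, hz1, hz2⟩ := exists_between hz
      have hzm : z ∈ Set.Ioo 0 φ :=
        ⟨by linarith [le_max_right a (φ / 2)], hz2⟩
      filter_upwards [Ioo_mem_nhdsGT (hHpos z hzm)] with q hq
      have := hfanti hq.1 (hHpos z hzm) hq.2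
      rw [hinv z hzm] at this
      linarith [le_max_left a (φ / 2)]
    · intro a ha
      filter_upwards [self_mem_nhdsWithin] with q hq
      exact (hf q hq).2.trans ha
end

section
/- Suppose μ(r̃(φ*) − 1) > 0 and set q := μ(r̃(φ*) − 1). Then necessarily φ* < 1, and the function ℕ₀ ∋ x ↦ (φ*)^x is bounded, strictly positive, q-harmonic, and tends to 0 at infinity. -/
open MeasureTheory Filter Set

/-- if `μ(r̃(φ*) - 1) > 0` and `q := μ(r̃(φ*) - 1)`, then `φ* < 1` and
`x ↦ (φ*)^x` is bounded, strictly positive, `q`-harmonic and tends to `0` at infinity. -/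
theorem stmt5 (lam mu rneg : ℝ) (p r : ℕ → ℝ) (φ : ℝ)
    (hlam : 0 < lam)
    (hp : ∀ k, 0 ≤ p k) (hpsum : ∑' k, p k = 1) (hp0 : 0 < p 0) (hp1 : p 1 = 0)
    (hφ0 : 0 < φ) (hφ1 : φ ≤ 1) (hφfix : ptilde p φ = φ)
    (hφlo : ∀ z : ℝ, 0 < z → z < φ → z < ptilde p z)
    (hφhi : ∀ z : ℝ, φ < z → z < 1 → ptilde p z < z)
    (hmu : 0 ≤ mu) (hrneg : 0 ≤ rneg) (hr : ∀ k, 0 ≤ r k) (hr0 : r 0 = 0)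
    (hrsum : rneg + ∑' k, r k = 1)
    (hq : 0 < mu * (rtilde rneg r φ - 1)) :
    φ < 1 ∧
    (∃ C : ℝ, ∀ x : ℕ, |φ ^ x| ≤ C) ∧
    (∀ x : ℕ, 0 < φ ^ x) ∧
    IsQHarmonic lam mu (mu * (rtilde rneg r φ - 1)) p rneg r (fun x : ℕ => φ ^ x) ∧
    Filter.Tendsto (fun x : ℕ => φ ^ x) Filter.atTop (nhds 0) := by
  have hlt : φ < 1 := by
    rcases hφ1.lt_or_eq with h | h
    · exact h
    · exfalso
      subst h
      simp [rtilde, hrsum] at hq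
  refine ⟨hlt, ⟨1, fun x => ?_⟩, fun x => pow_pos hφ0 x, ?_,
    tendsto_pow_atTop_nhds_zero_of_lt_one hφ0.le hlt⟩
  · rw [abs_of_pos (pow_pos hφ0 x)]
    exact pow_le_one₀ hφ0.le hφ1
  · intro x hx
    obtain ⟨n, rfl⟩ : ∃ n, x = n + 1 := ⟨x - 1, by omega⟩
    have h1 : ∑' k, p k * φ ^ (n + 1 + k - 1) = φ ^ n * φ := by
      have : ∀ k, p k * φ ^ (n + 1 + k - 1) = φ ^ n * (p k * φ ^ k) := by
        intro k
        rw [show n + 1 + k - 1 = n + k by omega, pow_add]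
        ring
      simp_rw [this]
      rw [tsum_mul_left]
      congr 1
    have h2 : ∑' k, r k * φ ^ (n + 1 + k) = φ ^ (n + 1) * ∑' k, r k * φ ^ k := by
      rw [← tsum_mul_left]
      congr 1
      ext k
      rw [pow_add]
      ring
    simp only [h1, h2, rtilde, Nat.add_sub_cancel]
    have := hφ0.ne'
    field_simp
    ring
end

section
/- Assume μ = 0 and let q ∈ (0,∞) (so θ_q = 0 and γ_q(v) = q/(λ(p̃(v) − v)) on (0,φ*)). Then for every x ∈ ℕ₀: Φ_q(x) = 1_{x=0} + x ∫_0^{φ*} v^{x−1} exp{−q ∫_0^v dw/(λ(p̃(w) − w))} dv. If moreover condition (E') holds, then for every x ∈ ℕ₀: Ψ_q(x) = x ∫_{φ*}^1 v^{x−1} exp{−q ∫_v^1 dw/(λ(w − p̃(w)))} dv. -/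
open MeasureTheory Filter Set

lemma aux_A {a b : ℝ} (hab : a ≤ b) (E e : ℝ → ℝ) (hc : ContinuousOn E (Icc a b))
    (hd : ∀ v ∈ Ioo a b, HasDerivAt E (e v) v) (he : ∀ v ∈ Ioo a b, 0 ≤ e v) (x : ℕ) :
    ∫ v in a..b, e v * v ^ x = E b * b ^ x - E a * a ^ x
      - x * ∫ v in a..b, v ^ (x - 1) * E v := by
  have hi : IntervalIntegrable e volume a b := by
    rw [intervalIntegrable_iff_integrableOn_Ioc_of_le hab]
    exact intervalIntegral.integrableOn_deriv_of_nonneg hc hd he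
  have h1 : IntervalIntegrable (fun v => e v * v ^ x) volume a b :=
    hi.mul_continuousOn (by fun_prop)
  have h2 : IntervalIntegrable (fun v => (x:ℝ) * (v ^ (x - 1) * E v)) volume a b := by
    apply ContinuousOn.intervalIntegrable
    rw [uIcc_of_le hab]
    fun_prop
  have := intervalIntegral.integral_eq_sub_of_hasDerivAt_of_le hab
    (f := fun v => E v * v ^ x) (f' := fun v => e v * v ^ x + (x:ℝ) * (v ^ (x - 1) * E v))
    (by fun_prop) (fun v hv => by
      exact ((hd v hv).mul (hasDerivAt_pow x v)).congr_deriv (by ring)) (h1.add h2)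
  rw [intervalIntegral.integral_add h1 h2, intervalIntegral.integral_const_mul] at this
  linarith

lemma aux_B {a b K q : ℝ} (hab : a < b) (hK : 0 < K) (hq : 0 < q) (g : ℝ → ℝ)
    (hg : ContinuousOn g (Ioo a b))
    (hi : ∀ c ∈ Ioo a b, IntervalIntegrable g volume a c)
    (hlow : ∀ w ∈ Ioo a b, K * (1 / (b - w)) ≤ g w) (E : ℝ → ℝ) 
    (hE : ∀ v ∈ Ico a b, E v = Real.exp (-(q * ∫ w in a..v, g w))) (hEb : E b = 0) :
    ContinuousOn E (Icc a b) ∧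
    (∀ v ∈ Ioo a b, HasDerivAt E (-(Real.exp (-(q * ∫ w in a..v, g w)) * (q * g v))) v) := by
  have hder : ∀ v ∈ Ioo a b, HasDerivAt E
      (-(Real.exp (-(q * ∫ w in a..v, g w)) * (q * g v))) v := by
    intro v hv
    have h1 : HasDerivAt (fun v => ∫ w in a..v, g w) (g v) v :=
      intervalIntegral.integral_hasDerivAt_right (hi v hv)
        (hg.stronglyMeasurableAtFilter isOpen_Ioo v hv) (hg.continuousAt (Ioo_mem_nhds hv.1 hv.2))
    have h2 := ((h1.const_mul q).fun_neg).exp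
    have h3 : E =ᶠ[nhds v] fun v => Real.exp (-(q * ∫ w in a..v, g w)) := by
      filter_upwards [Ioo_mem_nhds hv.1 hv.2] with u hu using hE u ⟨hu.1.le, hu.2⟩
    exact (h2.congr_of_eventuallyEq h3).congr_deriv (by ring)
  refine ⟨?_, hder⟩
  intro v hv
  rcases eq_or_lt_of_le hv.2 with rfl | hvb
  · -- right endpoint
    rw [← continuousWithinAt_sdiff_self]
    rw [Icc_sdiff_right]
    unfold ContinuousWithinAt
    rw [hEb]
    have hub : ∀ u ∈ Ico a v, E u ≤ Real.exp (q * K * Real.log (v - u) - q * K * Real.log (v - a)) := by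
      intro u hu
      rw [hE u hu]
      apply Real.exp_le_exp.2
      rcases eq_or_lt_of_le hu.1 with rfl | hau
      · simp
      have hmono : ∫ w in a..u, K * (1 / (v - w)) ≤ ∫ w in a..u, g w := by
        apply intervalIntegral.integral_mono_on_of_le_Ioo hau.le _ (hi u ⟨hau, hu.2⟩)
        · intro w hw
          exact hlow w ⟨hw.1, hw.2.trans hu.2⟩
        · apply ContinuousOn.intervalIntegrable
          rw [uIcc_of_le hau.le]
          apply ContinuousOn.mul (by fun_prop)
          apply ContinuousOn.div (by fun_prop) (by fun_prop)
          intro w hw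
          have := hw.2
          have := hu.2
          linarith
      have hint : ∫ w in a..u, K * (1 / (v - w)) = K * (Real.log (v - a) - Real.log (v - u)) := by
        rw [intervalIntegral.integral_const_mul,
          intervalIntegral.integral_comp_sub_left (fun w => 1 / w) v,
          integral_one_div_of_pos (by linarith [hu.2]) (by linarith),
          Real.log_div (by linarith) (by linarith [hu.2])]
      rw [hint] at hmono
      nlinarith
    refine squeeze_zero' (f := E) (g := fun u => Real.exp (q * K * Real.log (v - u) - q * K * Real.log (v - a))) ?_ ?_ ?_
    · filter_upwards [self_mem_nhdsWithin] with u hu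
      rw [hE u hu]; positivity
    · filter_upwards [self_mem_nhdsWithin] with u hu using hub u hu
    · apply Real.tendsto_exp_atBot.comp
      apply tendsto_atBot_add_const_right
      apply Tendsto.const_mul_atBot (by positivity)
      apply Real.tendsto_log_nhdsGT_zero.comp
      apply tendsto_nhdsWithin_iff.2 ⟨?_, ?_⟩
      · have : Tendsto (fun u => v - u) (nhds v) (nhds (v - v)) := by
          apply Continuous.tendsto; fun_prop
        rw [sub_self] at this
        exact this.mono_left nhdsWithin_le_nhds
      · filter_upwards [self_mem_nhdsWithin] with u hu
        simpa using hu.2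
  rcases eq_or_lt_of_le hv.1 with rfl | hav
  · -- left endpoint
    obtain ⟨c, hc⟩ := exists_between hab
    have h1 : ContinuousOn (fun v => ∫ w in a..v, g w) (uIcc a c) := by
      apply intervalIntegral.continuousOn_primitive_interval'
        (hi c hc) left_mem_uIcc
    rw [uIcc_of_le hc.1.le] at h1
    have h2 : ContinuousOn E (Icc a c) := by
      apply ContinuousOn.congr (f := fun v => Real.exp (-(q * ∫ w in a..v, g w)))
      · exact Real.continuous_exp.comp_continuousOn ((h1.const_mul q).neg)
      · intro u hu
        exact hE u ⟨hu.1, hu.2.trans_lt hc.2⟩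
    have h3 := h2 a ⟨le_rfl, hc.1.le⟩
    exact h3.mono_of_mem_nhdsWithin (by
      apply mem_nhdsWithin.2 ⟨Iio c, isOpen_Iio, hc.1, ?_⟩
      rintro u ⟨hu1, hu2⟩
      exact ⟨hu2.1, le_of_lt hu1⟩)
  · exact (hder v ⟨hav, hvb⟩).continuousAt.continuousWithinAt

lemma aux_pos {a b K q : ℝ} (hab : a < b) (hK : 0 < K) (hq : 0 < q) (g : ℝ → ℝ)
    (hg : ContinuousOn g (Ioo a b))
    (hi : ∀ c ∈ Ioo a b, IntervalIntegrable g volume a c)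
    (hlow : ∀ w ∈ Ioo a b, K * (1 / (b - w)) ≤ g w) (x : ℕ) :
    ∫ v in a..b, (Real.exp (-(q * ∫ w in a..v, g w)) * (q * g v)) * v ^ x
      = a ^ x + x * ∫ v in a..b, v ^ (x - 1) * Real.exp (-(q * ∫ w in a..v, g w)) := by
  classical
  set E : ℝ → ℝ := fun v => if v = b then 0 else Real.exp (-(q * ∫ w in a..v, g w)) with hEdef
  have hE : ∀ v ∈ Ico a b, E v = Real.exp (-(q * ∫ w in a..v, g w)) := by
    intro v hv
    simp [hEdef, hv.2.ne]
  have hEb : E b = 0 := by simp [hEdef]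
  obtain ⟨h1, h2⟩ := aux_B hab hK hq g hg hi hlow E hE hEb
  have hnn : ∀ v ∈ Ioo a b, 0 ≤ Real.exp (-(q * ∫ w in a..v, g w)) * (q * g v) := by
    intro v hv
    have : 0 < 1 / (b - v) := by
      have := hv.2
      apply one_div_pos.2; linarith
    have := (by positivity : 0 ≤ K * (1 / (b - v))).trans (hlow v hv)
    positivity
  rw [aux_A hab.le (fun v => - E v) _ h1.neg
    (fun v hv => by simpa using (h2 v hv).fun_neg) hnn x]
  have hEa : E a = 1 := by rw [hE a ⟨le_rfl, hab⟩]; simp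
  have : ∫ v in a..b, v ^ (x - 1) * (- E v)
      = - ∫ v in a..b, v ^ (x - 1) * Real.exp (-(q * ∫ w in a..v, g w)) := by
    rw [← intervalIntegral.integral_neg]
    apply intervalIntegral.integral_congr_Ioo_of_le hab.le
    intro v hv
    simp only
    rw [hE v ⟨hv.1.le, hv.2⟩]
    ring
  rw [this, hEa, hEb]
  ring

lemma aux_neg {a b K q : ℝ} (hab : a < b) (hK : 0 < K) (hq : 0 < q) (g : ℝ → ℝ)
    (hg : ContinuousOn g (Ioo a b))
    (hi : ∀ c ∈ Ioo a b, IntervalIntegrable g volume c b)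
    (hlow : ∀ w ∈ Ioo a b, K * (1 / (w - a)) ≤ g w) (x : ℕ) :
    ∫ v in a..b, (Real.exp (-(q * ∫ w in v..b, g w)) * (q * g v)) * v ^ x
      = b ^ x - x * ∫ v in a..b, v ^ (x - 1) * Real.exp (-(q * ∫ w in v..b, g w)) := by
  have key := aux_pos (a := -b) (b := -a) (by linarith) hK hq (fun w => g (-w))
    (hg.comp (by fun_prop) (fun w hw => ⟨by linarith [hw.2], by linarith [hw.1]⟩))
    (fun c hc => by
      have := (hi (-c) ⟨by linarith [hc.2], by linarith [hc.1]⟩).symm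
      simpa using this.comp_sub_left 0)
    (fun w hw => by
      have := hlow (-w) ⟨by linarith [hw.2], by linarith [hw.1]⟩
      convert this using 3
      ring) x
  have hin : ∀ v, ∫ w in (-b)..v, g (-w) = ∫ w in (-v)..b, g w := by
    intro v
    rw [intervalIntegral.integral_comp_neg]
    simp
  simp only [hin] at key
  have e1 := intervalIntegral.integral_comp_neg (a := -b) (b := -a)
    (fun v => (Real.exp (-(q * ∫ w in v..b, g w)) * (q * g v)) * (-v) ^ x)
  have e2 := intervalIntegral.integral_comp_neg (a := -b) (b := -a)
    (fun v => (-v) ^ (x-1) * Real.exp (-(q * ∫ w in v..b, g w)))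
  simp only [neg_neg] at e1 e2
  rw [e1, e2] at key
  have p1 : ∫ v in a..b, (Real.exp (-(q * ∫ w in v..b, g w)) * (q * g v)) * (-v) ^ x
     = (-1)^x * ∫ v in a..b, (Real.exp (-(q * ∫ w in v..b, g w)) * (q * g v)) * v ^ x := by
    rw [← intervalIntegral.integral_const_mul]
    congr 1; ext v; rw [neg_pow]; ring
  have p2 : ∫ v in a..b, (-v) ^ (x-1) * Real.exp (-(q * ∫ w in v..b, g w))
     = (-1)^(x-1) * ∫ v in a..b, v ^ (x-1) * Real.exp (-(q * ∫ w in v..b, g w)) := by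
    rw [← intervalIntegral.integral_const_mul]
    congr 1; ext v; rw [neg_pow]; ring
  rw [p1, p2, neg_pow b] at key
  have hs : ((-1:ℝ)^x) * (-1)^x = 1 := by rw [← mul_pow]; simp
  rcases x with _ | y
  · simpa using key
  · simp only [Nat.add_sub_cancel] at key ⊢
    have hs' : ((-1:ℝ)^y) * (-1)^y = 1 := by rw [← mul_pow]; simp
    rw [pow_succ (-1:ℝ)] at key
    have h3 : (-1:ℝ) * (-1)^y * _ = (-1:ℝ) * (-1)^y * _ :=
      congrArg (fun t => (-1:ℝ) * (-1)^y * t) key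
    generalize (∫ v in a..b, (Real.exp (-(q * ∫ w in v..b, g w)) * (q * g v)) * v ^ (y+1)) = I at *
    generalize (∫ v in a..b, v ^ y * Real.exp (-(q * ∫ w in v..b, g w))) = J at *
    linear_combination h3 - (I - b^(y+1) + ((y+1:ℕ):ℝ) * J) * hs'

lemma ptilde_summable {p : ℕ → ℝ} (hp : ∀ k, 0 ≤ p k) (hs : Summable p) {z : ℝ}
    (h0 : 0 ≤ z) (h1 : z ≤ 1) : Summable (fun k => p k * z ^ k) :=
  Summable.of_nonneg_of_le (fun k => mul_nonneg (hp k) (pow_nonneg h0 k))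
    (fun k => mul_le_of_le_one_right (hp k) (pow_le_one₀ h0 h1)) hs

lemma ptilde_mono {p : ℕ → ℝ} (hp : ∀ k, 0 ≤ p k) (hs : Summable p) {y z : ℝ}
    (h0 : 0 ≤ y) (hyz : y ≤ z) (h1 : z ≤ 1) : ptilde p y ≤ ptilde p z :=
  Summable.tsum_le_tsum (fun k => mul_le_mul_of_nonneg_left (pow_le_pow_left₀ h0 hyz k) (hp k))
    (ptilde_summable hp hs h0 (hyz.trans h1)) (ptilde_summable hp hs (h0.trans hyz) h1)

lemma ptilde_cont {p : ℕ → ℝ} (hp : ∀ k, 0 ≤ p k) (hs : Summable p) :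
    ContinuousOn (ptilde p) (Icc 0 1) := by
  unfold ptilde
  apply continuousOn_tsum (u := p) (fun k => by fun_prop) hs
  intro k z hz
  rw [Real.norm_of_nonneg (mul_nonneg (hp k) (pow_nonneg hz.1 k))]
  exact mul_le_of_le_one_right (hp k) (pow_le_one₀ hz.1 hz.2)

/-- with `μ = 0` (so `θ_q = 0`), for every `x`:
`Φ_q(x) = 1_{x=0} + x ∫_0^{φ*} v^{x-1} exp{-q ∫_0^v dw/(λ(p̃(w)-w))} dv`, and, under (E'),
`Ψ_q(x) = x ∫_{φ*}^1 v^{x-1} exp{-q ∫_v^1 dw/(λ(w-p̃(w)))} dv`. -/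
theorem stmt11 (lam : ℝ) (p : ℕ → ℝ) (φ q : ℝ)
    (hlam : 0 < lam)
    (hp : ∀ k, 0 ≤ p k) (hpsum : ∑' k, p k = 1) (hp0 : 0 < p 0) (hp1 : p 1 = 0)
    (hp0lt : p 0 < 1)
    (hφ0 : 0 < φ) (hφ1 : φ ≤ 1) (hφfix : ptilde p φ = φ)
    (hφlo : ∀ z : ℝ, 0 < z → z < φ → z < ptilde p z)
    (hφhi : ∀ z : ℝ, φ < z → z < 1 → ptilde p z < z)
    (hq : 0 < q) :
    (∀ x : ℕ, Phi lam 0 p 0 (fun _ => 0) φ 0 q x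
      = (if x = 0 then 1 else 0)
        + x * ∫ v in (0:ℝ)..φ, v ^ (x - 1) *
            Real.exp (-(q * ∫ w in (0:ℝ)..v, 1 / (lam * (ptilde p w - w))))) ∧
    (CondE p φ →
      ∀ x : ℕ, Psi lam 0 p 0 (fun _ => 0) φ q x
        = x * ∫ v in φ..(1:ℝ), v ^ (x - 1) *
            Real.exp (-(q * ∫ w in v..(1:ℝ), 1 / (lam * (w - ptilde p w))))) := by
  have hs : Summable p := by
    by_contra h
    rw [tsum_eq_zero_of_not_summable h] at hpsum
    norm_num at hpsum
  have hcont := ptilde_cont hp hs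
  have hpt0 : ptilde p 0 = p 0 := by
    unfold ptilde
    rw [tsum_eq_single 0 (fun k hk => by simp [hk])]
    simp
  constructor
  · intro x
    have hposv : ∀ w ∈ Ico 0 φ, 0 < ptilde p w - w := by
      intro w hw
      rcases eq_or_lt_of_le hw.1 with rfl | h
      · rw [hpt0]; linarith
      · linarith [hφlo w h hw.2]
    have hgc : ContinuousOn (fun w => 1 / (lam * (ptilde p w - w))) (Ico 0 φ) := by
      apply ContinuousOn.div (by fun_prop)
      · have := hcont.mono (fun w (hw : w ∈ Ico 0 φ) => ⟨hw.1, hw.2.le.trans hφ1⟩)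
        fun_prop
      · intro w hw
        exact (mul_pos hlam (hposv w hw)).ne'
    have key := aux_pos (a := 0) (b := φ) (K := 1 / lam) hφ0 (by positivity) hq
      (fun w => 1 / (lam * (ptilde p w - w))) (hgc.mono Ioo_subset_Ico_self)
      (fun c hc => by
        apply ContinuousOn.intervalIntegrable
        rw [uIcc_of_le hc.1.le]
        exact hgc.mono (fun w hw => ⟨hw.1, hw.2.trans_lt hc.2⟩))
      (fun w hw => by
        have h1 := hposv w ⟨hw.1.le, hw.2⟩
        have h2 := ptilde_mono hp hs hw.1.le hw.2.le hφ1
        rw [hφfix] at h2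
        rw [one_div_mul_one_div]
        apply one_div_le_one_div_of_le (by positivity)
        apply mul_le_mul_of_nonneg_left _ hlam.le
        linarith) x
    have h0 : (0:ℝ) ^ x = if x = 0 then 1 else 0 := by
      split_ifs with h <;> simp [h]
    rw [← h0, ← key]
    unfold Phi
    rw [← intervalIntegral.integral_const_mul]
    apply intervalIntegral.integral_congr_Ioo_of_le hφ0.le
    intro v hv
    have hin : ∫ w in (0:ℝ)..v, (q + 0 * (1 - rtilde 0 (fun _ => 0) w)) / (lam * |ptilde p w - w|)
        = q * ∫ w in (0:ℝ)..v, 1 / (lam * (ptilde p w - w)) := by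
      rw [← intervalIntegral.integral_const_mul]
      apply intervalIntegral.integral_congr_Ioo_of_le hv.1.le
      intro w hw
      simp only
      rw [abs_of_pos (hposv w ⟨hw.1.le, hw.2.trans hv.2⟩)]
      ring
    simp only
    rw [hin, abs_of_pos (hposv v ⟨hv.1.le, hv.2⟩)]
    ring
  · rintro ⟨v0, hv0, hv01, hint⟩ x
    have hφlt : φ < 1 := hv0.trans hv01
    have hposv : ∀ w ∈ Ioo φ 1, 0 < w - ptilde p w := by
      intro w hw
      linarith [hφhi w hw.1 hw.2]
    have hgc : ContinuousOn (fun w => 1 / (lam * (w - ptilde p w))) (Ioo φ 1) := by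
      apply ContinuousOn.div (by fun_prop)
      · have := hcont.mono (fun w (hw : w ∈ Ioo φ 1) => ⟨hφ0.le.trans hw.1.le, hw.2.le⟩)
        fun_prop
      · intro w hw
        exact (mul_pos hlam (hposv w hw)).ne'
    have hint' : IntervalIntegrable (fun w => 1 / (lam * (w - ptilde p w))) volume v0 1 := by
      have := hint.const_mul (1 / lam)
      simpa only [one_div_mul_one_div] using this
    have key := aux_neg (a := φ) (b := 1) (K := 1 / lam) hφlt (by positivity) hq
      (fun w => 1 / (lam * (w - ptilde p w))) hgc
      (fun c hc => by
        refine IntervalIntegrable.trans ?_ hint'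
        apply ContinuousOn.intervalIntegrable
        apply hgc.mono
        intro w hw
        exact (ordConnected_Ioo.uIcc_subset hc ⟨hv0, hv01⟩) hw)
      (fun w hw => by
        have h1 := hposv w hw
        have h2 := ptilde_mono hp hs hφ0.le hw.1.le hw.2.le
        rw [hφfix] at h2
        rw [one_div_mul_one_div]
        apply one_div_le_one_div_of_le (by positivity)
        apply mul_le_mul_of_nonneg_left _ hlam.le
        linarith) x
    have : Psi lam 0 p 0 (fun _ => 0) φ q x = 1 - ∫ v in φ..(1:ℝ),
        (Real.exp (-(q * ∫ w in v..(1:ℝ), 1 / (lam * (w - ptilde p w))))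
          * (q * (1 / (lam * (v - ptilde p v))))) * v ^ x := by
      unfold Psi
      rw [← intervalIntegral.integral_const_mul]
      congr 1
      apply intervalIntegral.integral_congr_Ioo_of_le hφlt.le
      intro v hv
      have hin : ∫ w in v..(1:ℝ), (q + 0 * (1 - rtilde 0 (fun _ => 0) w)) / (lam * |ptilde p w - w|)
          = q * ∫ w in v..(1:ℝ), 1 / (lam * (w - ptilde p w)) := by
        rw [← intervalIntegral.integral_const_mul]
        apply intervalIntegral.integral_congr_Ioo_of_le hv.2.le
        intro w hw
        simp only
        rw [abs_sub_comm, abs_of_pos (hposv w ⟨hv.1.trans hw.1, hw.2⟩)]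
        ring
      simp only
      rw [hin, abs_sub_comm, abs_of_pos (hposv v hv)]
      ring
    rw [this, key]
    simp
end

section
/- Let q ∈ (0,∞) and μ ∈ (0,∞), and assume: λ = q + μ, ∑_{k=0}^∞ k p_k = μ/(q + μ), r_{−1} = 0, and r_k = ((q + μ)/μ)(k + 1) p_{k+1} for every k ∈ ℕ. Then ∑_{k=1}^∞ r_k = 1 (so r is a genuine immigration mechanism), φ* = 1, θ_q = 0, q + μ(1 − r̃(z)) = λ(1 − p̃′(z)) for all z ∈ (0,1), and Φ_q(x) = q/(λ p_0 (x + 1)) for every x ∈ ℕ₀; in particular Φ_q(x)/Φ_q(0) = 1/(x + 1). -/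
open MeasureTheory Filter Set

/-- under the stated relations between `λ, μ, q, p, r`, one has
`∑_{k≥1} r_k = 1`, `φ* = 1`, `θ_q = 0`, `q + μ(1 - r̃(z)) = λ(1 - p̃'(z))` on `(0,1)`, and
`Φ_q(x) = q/(λ p_0 (x+1))`; in particular `Φ_q(x)/Φ_q(0) = 1/(x+1)`. -/
theorem stmt12 (lam mu rneg : ℝ) (p r : ℕ → ℝ) (φ q θq : ℝ)
    (hlam : 0 < lam)
    (hp : ∀ k, 0 ≤ p k) (hpsum : ∑' k, p k = 1) (hp0 : 0 < p 0) (hp1 : p 1 = 0)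
    (hφ0 : 0 < φ) (hφ1 : φ ≤ 1) (hφfix : ptilde p φ = φ)
    (hφlo : ∀ z : ℝ, 0 < z → z < φ → z < ptilde p z)
    (hφhi : ∀ z : ℝ, φ < z → z < 1 → ptilde p z < z)
    (hr : ∀ k, 0 ≤ r k) (hr0 : r 0 = 0)
    (hq : 0 < q) (hmu : 0 < mu)
    (hlameq : lam = q + mu)
    (hmean : ∑' k : ℕ, (k : ℝ) * p k = mu / (q + mu))
    (hrneg : rneg = 0)
    (hrdef : ∀ k : ℕ, 1 ≤ k → r k = ((q + mu) / mu) * (k + 1) * p (k + 1))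
    -- characterization of `θ_q`
    (hθpos : 0 < mu * rneg →
      θq ∈ Set.Ioo (0:ℝ) 1 ∧ q = mu * (rtilde rneg r θq - 1))
    (hθzero : mu * rneg = 0 → θq = 0) :
    (∑' k : ℕ, r k = 1) ∧
    φ = 1 ∧
    θq = 0 ∧
    (∀ z ∈ Set.Ioo (0:ℝ) 1,
      q + mu * (1 - rtilde rneg r z) = lam * (1 - deriv (ptilde p) z)) ∧
    (∀ x : ℕ, Phi lam mu p rneg r φ θq q x = q / (lam * p 0 * (x + 1))) ∧
    (∀ x : ℕ, Phi lam mu p rneg r φ θq q x / Phi lam mu p rneg r φ θq q 0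
      = 1 / (x + 1)) := by
  have hps : Summable p := by
    by_contra h
    rw [tsum_eq_zero_of_not_summable h] at hpsum
    exact zero_ne_one hpsum
  have hqm : 0 < q + mu := by linarith
  have hks : Summable (fun k : ℕ => (k : ℝ) * p k) := by
    by_contra h
    rw [tsum_eq_zero_of_not_summable h] at hmean
    have : 0 < mu / (q + mu) := by positivity
    linarith
  have hrall : ∀ k : ℕ, r k = ((q + mu) / mu) * (((k + 1 : ℕ) : ℝ) * p (k + 1)) := by
    intro k
    rcases Nat.eq_zero_or_pos k with h | h
    · subst h; simp [hr0, hp1]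
    · rw [hrdef k h]; push_cast; ring
  have hks1 : Summable (fun k : ℕ => ((k + 1 : ℕ) : ℝ) * p (k + 1)) :=
    (summable_nat_add_iff (f := fun k : ℕ => (k : ℝ) * p k) 1).2 hks
  have hrs : Summable r := by
    have := hks1.mul_left ((q + mu) / mu)
    exact this.congr (fun k => (hrall k).symm)
  have hsum1 : ∑' k : ℕ, r k = 1 := by
    rw [tsum_congr hrall, tsum_mul_left]
    have h := hks.tsum_eq_zero_add
    rw [hmean] at h
    simp only [Nat.cast_zero, zero_mul, zero_add] at h
    rw [← h]
    field_simp
  have hφ : φ = 1 := by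
    by_contra hne
    have hlt : φ < 1 := lt_of_le_of_ne hφ1 hne
    have hs : Summable (fun k => p k * φ ^ k) :=
      Summable.of_nonneg_of_le (fun k => mul_nonneg (hp k) (pow_nonneg hφ0.le k))
        (fun k => mul_le_of_le_one_right (hp k) (pow_le_one₀ hφ0.le hφ1)) hps
    have h1 : ∑' k, (p k - p k * φ ^ k) ≤ ∑' k : ℕ, (k : ℝ) * p k * (1 - φ) := by
      refine (hps.sub hs).tsum_le_tsum (fun k => ?_) (hks.mul_right _)
      have hb := one_add_mul_le_pow (a := φ - 1) (by linarith) k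
      have h2 : 1 + (k : ℝ) * (φ - 1) ≤ φ ^ k := by simpa using hb
      nlinarith [hp k]
    rw [hps.tsum_sub hs, tsum_mul_right, hpsum, hmean] at h1
    have hf : ∑' k, p k * φ ^ k = φ := hφfix
    rw [hf] at h1
    have h3 : mu / (q + mu) < 1 := by rw [div_lt_one hqm]; linarith
    nlinarith
  have hθ : θq = 0 := hθzero (by rw [hrneg, mul_zero])
  have hder : ∀ z ∈ Set.Ioo (-1:ℝ) 1,
      HasDerivAt (ptilde p) (∑' k : ℕ, p k * (k * z ^ (k - 1))) z := by
    intro z hz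
    unfold ptilde
    refine hasDerivAt_tsum_of_isPreconnected (u := fun k : ℕ => (k : ℝ) * p k)
      (t := Set.Ioo (-1:ℝ) 1) (y₀ := 0) hks isOpen_Ioo isPreconnected_Ioo
      (fun k y _ => (hasDerivAt_pow k y).const_mul (p k)) (fun k y hy => ?_)
      (by constructor <;> norm_num) ?_ hz
    · have hy1 : |y| ≤ 1 := abs_le.2 ⟨hy.1.le, hy.2.le⟩
      rw [norm_mul, norm_mul, norm_pow, Real.norm_of_nonneg (hp k), Real.norm_eq_abs,
        Real.norm_eq_abs, Nat.abs_cast]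
      have : |y| ^ (k - 1) ≤ 1 := pow_le_one₀ (abs_nonneg y) hy1
      have h5 : 0 ≤ (k : ℝ) * p k := mul_nonneg (Nat.cast_nonneg k) (hp k)
      nlinarith
    · exact Summable.of_nonneg_of_le (fun k => mul_nonneg (hp k) (pow_nonneg le_rfl k))
        (fun k => mul_le_of_le_one_right (hp k) (pow_le_one₀ le_rfl zero_le_one)) hps
  have hkey : ∀ z ∈ Set.Ioo (-1:ℝ) 1,
      q + mu * (1 - rtilde rneg r z) = lam * (1 - ∑' k : ℕ, p k * (k * z ^ (k - 1))) := by
    intro z hz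
    have hz1 : |z| ≤ 1 := abs_le.2 ⟨hz.1.le, hz.2.le⟩
    have hs : Summable (fun k : ℕ => p k * (k * z ^ (k - 1))) := by
      refine Summable.of_norm_bounded hks (fun k => ?_)
      rw [norm_mul, norm_mul, norm_pow, Real.norm_of_nonneg (hp k), Real.norm_eq_abs,
        Real.norm_eq_abs, Nat.abs_cast]
      have : |z| ^ (k - 1) ≤ 1 := pow_le_one₀ (abs_nonneg z) hz1
      have h5 : 0 ≤ (k : ℝ) * p k := mul_nonneg (Nat.cast_nonneg k) (hp k)
      nlinarith
    have h6 : ∑' k, r k * z ^ k = ((q + mu) / mu) * ∑' k : ℕ, p k * (k * z ^ (k - 1)) := by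
      rw [hs.tsum_eq_zero_add]
      simp only [Nat.cast_zero, zero_mul, mul_zero, zero_add, Nat.add_sub_cancel]
      rw [← tsum_mul_left]
      refine tsum_congr (fun k => ?_)
      rw [hrall k]; ring
    unfold rtilde
    rw [h6, hrneg, hlameq]
    field_simp
    ring
  have hp00 : ptilde p 0 = p 0 := by
    unfold ptilde
    rw [tsum_eq_single 0 (fun k hk => by simp [hk])]
    simp
  have hpos : ∀ w : ℝ, 0 ≤ w → w < 1 → 0 < ptilde p w - w := by
    intro w h0 h1
    rcases h0.eq_or_lt with h | h
    · rw [← h, hp00]; linarith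
    · have := hφlo w h (by rw [hφ]; exact h1)
      linarith
  have hrcont : ContinuousOn (rtilde rneg r) (Set.Icc 0 1) := by
    unfold rtilde
    simp only [hrneg, zero_div, zero_add]
    refine continuousOn_tsum (fun k => by fun_prop) hrs (fun k y hy => ?_)
    rw [norm_mul, norm_pow, Real.norm_of_nonneg (hr k), Real.norm_of_nonneg hy.1]
    exact mul_le_of_le_one_right (hr k) (pow_le_one₀ hy.1 hy.2)
  have hint : ∀ v ∈ Set.Ioo (0:ℝ) 1,
      (∫ w in (0:ℝ)..v, (q + mu * (1 - rtilde rneg r w)) / (lam * |ptilde p w - w|))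
        = Real.log (p 0) - Real.log (ptilde p v - v) := by
    intro v hv
    have hsub : ∀ w ∈ Set.uIcc 0 v, 0 ≤ w ∧ w < 1 := by
      intro w hw
      rw [Set.uIcc_of_le hv.1.le] at hw
      exact ⟨hw.1, hw.2.trans_lt hv.2⟩
    refine (intervalIntegral.integral_eq_sub_of_hasDerivAt
      (f := fun w => - Real.log (ptilde p w - w)) (fun w hw => ?_) ?_).trans ?_
    rotate_left 2
    · simp only [hp00]; ring_nf
    · obtain ⟨h0, h1⟩ := hsub w hw
      have hw' : w ∈ Set.Ioo (-1:ℝ) 1 := ⟨by linarith, h1⟩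
      have hP := hpos w h0 h1
      have hd := (((hder w hw').sub (hasDerivAt_id w)).log hP.ne').neg
      refine hd.congr_deriv ?_
      rw [hkey w hw', abs_of_pos hP]
      simp only [Pi.sub_apply, id]
      rw [mul_div_mul_left _ _ hlam.ne']
      ring
    · refine ContinuousOn.intervalIntegrable ?_
      refine ContinuousOn.div ?_ ?_ ?_
      · have : ContinuousOn (rtilde rneg r) (Set.uIcc 0 v) :=
          hrcont.mono (fun w hw => ⟨(hsub w hw).1, (hsub w hw).2.le⟩)
        fun_prop
      · have : ContinuousOn (ptilde p) (Set.uIcc 0 v) := fun w hw =>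
          (hder w ⟨by linarith [(hsub w hw).1], (hsub w hw).2⟩).continuousAt.continuousWithinAt
        fun_prop
      · intro w hw
        have := hpos w (hsub w hw).1 (hsub w hw).2
        positivity
  have hPhi : ∀ x : ℕ, Phi lam mu p rneg r φ θq q x = q / (lam * p 0 * (x + 1)) := by
    intro x
    unfold Phi
    rw [hφ, hθ]
    have : (∫ v in (0:ℝ)..1, Real.exp (-∫ w in (0:ℝ)..v,
          (q + mu * (1 - rtilde rneg r w)) / (lam * |ptilde p w - w|))
        / (lam * |ptilde p v - v|) * v ^ x) = ∫ v in (0:ℝ)..1, 1 / (lam * p 0) * v ^ x := by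
      rw [intervalIntegral.integral_of_le zero_le_one, intervalIntegral.integral_of_le zero_le_one,
        integral_Ioc_eq_integral_Ioo, integral_Ioc_eq_integral_Ioo]
      refine setIntegral_congr_fun measurableSet_Ioo (fun v hv => ?_)
      have hP := hpos v hv.1.le hv.2
      rw [hint v hv, neg_sub, Real.exp_sub, Real.exp_log hP, Real.exp_log hp0, abs_of_pos hP]
      field_simp
    rw [this, intervalIntegral.integral_const_mul, integral_pow]
    simp
    field_simp
  refine ⟨hsum1, hφ, hθ, fun z hz => ?_, hPhi, fun x => ?_⟩
  · have hz' : z ∈ Set.Ioo (-1:ℝ) 1 := ⟨by linarith [hz.1], hz.2⟩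
    rw [(hder z hz').deriv, hkey z hz']
  · rw [hPhi, hPhi]
    push_cast
    field_simp
    simp
end

section
/- Assume condition (E'). Then for every x ∈ ℕ, the double integral ∫_{φ*}^1 v^{x−1} (∫_v^1 dw/(λ(w − p̃(w)))) dv is finite. -/
open MeasureTheory Filter Set

theorem aux_summable (p : ℕ → ℝ) (hp : ∀ k, 0 ≤ p k) (hpsum : ∑' k, p k = 1) (z : ℝ)
    (h0 : 0 ≤ z) (h1 : z ≤ 1) : Summable (fun k => p k * z ^ k) := by
  have hs : Summable p := by
    by_contra h
    rw [tsum_eq_zero_of_not_summable h] at hpsum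
    norm_num at hpsum
  refine Summable.of_nonneg_of_le (fun k => mul_nonneg (hp k) (pow_nonneg h0 k)) (fun k => ?_) hs
  exact mul_le_of_le_one_right (hp k) (pow_le_one₀ h0 h1)

theorem aux_convex (p : ℕ → ℝ) (hp : ∀ k, 0 ≤ p k) (hpsum : ∑' k, p k = 1) (a b x y : ℝ)
    (hx0 : 0 ≤ x) (hx1 : x ≤ 1) (hy0 : 0 ≤ y) (hy1 : y ≤ 1) (ha : 0 ≤ a) (hb : 0 ≤ b)
    (hab : a + b = 1) :
    ptilde p (a * x + b * y) ≤ a * ptilde p x + b * ptilde p y := by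
  have sx := aux_summable p hp hpsum x hx0 hx1
  have sy := aux_summable p hp hpsum y hy0 hy1
  have sz := aux_summable p hp hpsum (a * x + b * y) (by positivity) (by nlinarith)
  unfold ptilde
  rw [← tsum_mul_left, ← tsum_mul_left, ← (sx.mul_left a).tsum_add (sy.mul_left b)]
  refine sz.tsum_le_tsum (fun k => ?_) ((sx.mul_left a).add (sy.mul_left b))
  have h := (convexOn_pow (𝕜 := ℝ) k).2 hx0 hy0 ha hb hab
  simp only [smul_eq_mul] at h
  have := mul_le_mul_of_nonneg_left h (hp k)
  linarith

theorem aux_J (φ : ℝ) (h : φ ≤ 1) :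
    (∫⁻ w in Set.Ioo φ 1, ENNReal.ofReal ((w - φ) ^ (-(1/2) : ℝ))) < ⊤ := by
  have h1 : IntervalIntegrable (fun w : ℝ => w ^ (-(1/2) : ℝ)) volume 0 (1 - φ) :=
    intervalIntegral.intervalIntegrable_rpow' (by norm_num)
  have h2 := h1.comp_sub_right φ
  simp only [zero_add, sub_add_cancel] at h2
  have h3 := (intervalIntegrable_iff_integrableOn_Ioo_of_le h).1 h2
  exact h3.lintegral_lt_top

/-- under condition (E'), for every `x ∈ ℕ` (`x ≥ 1`) the double integral
`∫_{φ*}^1 v^{x-1} (∫_v^1 dw/(λ(w - p̃(w)))) dv` is finite. -/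
theorem stmt13 (lam : ℝ) (p : ℕ → ℝ) (φ : ℝ)
    (hlam : 0 < lam)
    (hp : ∀ k, 0 ≤ p k) (hpsum : ∑' k, p k = 1) (hp0 : 0 < p 0) (hp1 : p 1 = 0)
    (hφ0 : 0 < φ) (hφ1 : φ ≤ 1) (hφfix : ptilde p φ = φ)
    (hφlo : ∀ z : ℝ, 0 < z → z < φ → z < ptilde p z)
    (hφhi : ∀ z : ℝ, φ < z → z < 1 → ptilde p z < z)
    (hE : CondE p φ) :
    ∀ x : ℕ, 1 ≤ x →
      (∫⁻ v in Set.Ioo φ 1, ENNReal.ofReal (v ^ (x - 1)) *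
        ∫⁻ w in Set.Ioo v 1, ENNReal.ofReal (1 / (lam * (w - ptilde p w)))) < ⊤ := by
  obtain ⟨v0, h1, h2, hint⟩ := hE
  intro x _
  set c : ℝ := (v0 - ptilde p v0) / (v0 - φ) with hc
  have hcpos : 0 < c := div_pos (by linarith [hφhi v0 h1 h2]) (by linarith)
  have key : ∀ w, φ < w → w ≤ v0 → c * (w - φ) ≤ w - ptilde p w := by
    intro w hw hw'
    have hd : 0 < v0 - φ := by linarith
    have h := aux_convex p hp hpsum ((v0 - w) / (v0 - φ)) ((w - φ) / (v0 - φ)) φ v0 hφ0.le hφ1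
      (by linarith) h2.le (div_nonneg (by linarith) hd.le) (div_nonneg (by linarith) hd.le)
      (by field_simp; ring)
    have e : (v0 - w) / (v0 - φ) * φ + (w - φ) / (v0 - φ) * v0 = w := by field_simp; ring
    rw [e, hφfix] at h
    have e2 : c * (w - φ) = w - ((v0 - w) / (v0 - φ) * φ + (w - φ) / (v0 - φ) * ptilde p v0) := by
      rw [hc]; field_simp; ring
    linarith
  have hK : (∫⁻ w in Set.Ioo v0 1, ENNReal.ofReal (1 / (lam * (w - ptilde p w)))) < ⊤ := by
    have h3 := (intervalIntegrable_iff_integrableOn_Ioo_of_le h2.le).1 (hint.const_mul (1 / lam))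
    have h4 := h3.lintegral_lt_top
    refine lt_of_le_of_lt (le_of_eq ?_) h4
    congr 1
    funext w
    rw [one_div_mul_one_div]
  set K := (∫⁻ w in Set.Ioo v0 1, ENNReal.ofReal (1 / (lam * (w - ptilde p w)))) with hKdef
  have hJ := aux_J φ hφ1
  set J := (∫⁻ w in Set.Ioo φ 1, ENNReal.ofReal ((w - φ) ^ (-(1/2) : ℝ))) with hJdef
  have bound : ∀ v ∈ Set.Ioo φ 1, ENNReal.ofReal (v ^ (x - 1)) *
        ∫⁻ w in Set.Ioo v 1, ENNReal.ofReal (1 / (lam * (w - ptilde p w))) ≤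
      (ENNReal.ofReal (1 / (lam * c)) * J) * ENNReal.ofReal ((v - φ) ^ (-(1/2) : ℝ)) + K := by
    intro v hv
    have hle1 : ENNReal.ofReal (v ^ (x - 1)) ≤ 1 := by
      rw [ENNReal.ofReal_le_one]
      exact pow_le_one₀ (by linarith [hv.1]) hv.2.le
    refine (mul_le_of_le_one_left' hle1).trans ?_
    have hsub : Set.Ioo v 1 ⊆ Set.Ioc v v0 ∪ Set.Ioo v0 1 := by
      intro w hw
      rcases le_or_gt w v0 with h | h
      · exact Or.inl ⟨hw.1, h⟩
      · exact Or.inr ⟨h, hw.2⟩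
    refine (lintegral_mono_set hsub).trans ((lintegral_union_le _ _ _).trans ?_)
    refine add_le_add ?_ le_rfl
    have hpt : ∀ w ∈ Set.Ioc v v0, ENNReal.ofReal (1 / (lam * (w - ptilde p w))) ≤
        (ENNReal.ofReal (1 / (lam * c)) * ENNReal.ofReal ((v - φ) ^ (-(1/2) : ℝ))) *
          ENNReal.ofReal ((w - φ) ^ (-(1/2) : ℝ)) := by
      intro w hw
      have hvp : 0 < v - φ := by linarith [hv.1]
      have hwp : 0 < w - φ := by linarith [hw.1]
      rw [← ENNReal.ofReal_mul (by positivity), ← ENNReal.ofReal_mul (by positivity)]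
      apply ENNReal.ofReal_le_ofReal
      have hk := key w (by linarith) hw.2
      have a1 : 1 / (lam * (w - ptilde p w)) ≤ 1 / (lam * (c * (w - φ))) :=
        one_div_le_one_div_of_le (by positivity) (mul_le_mul_of_nonneg_left hk hlam.le)
      have a2 : (w - φ) ^ (-(1/2) : ℝ) ≤ (v - φ) ^ (-(1/2) : ℝ) :=
        Real.rpow_le_rpow_of_nonpos hvp (by linarith [hw.1]) (by norm_num)
      have a3 : (w - φ)⁻¹ = (w - φ) ^ (-(1/2) : ℝ) * (w - φ) ^ (-(1/2) : ℝ) := by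
        rw [← Real.rpow_add hwp, ← Real.rpow_neg_one]; norm_num
      calc _ ≤ _ := a1
        _ = 1 / (lam * c) * (w - φ)⁻¹ := by field_simp
        _ = 1 / (lam * c) * (w - φ) ^ (-(1/2) : ℝ) * (w - φ) ^ (-(1/2) : ℝ) := by
          rw [a3]; ring
        _ ≤ _ := by gcongr
    calc _ ≤ _ := setLIntegral_mono' measurableSet_Ioc hpt
      _ = (ENNReal.ofReal (1 / (lam * c)) * ENNReal.ofReal ((v - φ) ^ (-(1/2) : ℝ))) *
          ∫⁻ w in Set.Ioc v v0, ENNReal.ofReal ((w - φ) ^ (-(1/2) : ℝ)) := by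
        rw [lintegral_const_mul' _ _ (by finiteness)]
      _ ≤ (ENNReal.ofReal (1 / (lam * c)) * ENNReal.ofReal ((v - φ) ^ (-(1/2) : ℝ))) * J := by
        gcongr
        exact lintegral_mono_set (fun w hw => ⟨hv.1.trans hw.1, hw.2.trans_lt h2⟩)
      _ = _ := by ring
  refine (setLIntegral_mono' measurableSet_Ioo bound).trans_lt ?_
  rw [lintegral_add_right _ measurable_const,
    lintegral_const_mul' _ _ (ENNReal.mul_ne_top ENNReal.ofReal_ne_top hJ.ne), setLIntegral_const]
  refine ENNReal.add_lt_top.2 ⟨?_, ?_⟩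
  · exact ENNReal.mul_lt_top (ENNReal.mul_lt_top ENNReal.ofReal_lt_top hJ) hJ
  · exact ENNReal.mul_lt_top hK (by simp)
end

section
/- Assume μ > 0, φ* = 1 and θ < 1. Then for every a ∈ ℕ₀: lim_{q↓0} Φ_q(a) = exp{−∫_θ^1 μ(1 − r̃(w))/(λ(p̃(w) − w)) dw}, where the integral takes its value in [0,∞] and exp{−∞} := 0 (in particular the limit does not depend on a). -/
open MeasureTheory Filter Set

open Topology

lemma aux_deriv (f : ℝ → ℝ) (hf : ContinuousOn f (Iio 1)) (v : ℝ) (hv : v < 1) :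
    HasDerivAt (fun v => ∫ w in (0:ℝ)..v, f w) (f v) v := by
  have hsub : uIcc 0 v ⊆ Iio (1:ℝ) := by
    intro x hx
    have := hx.2
    have h2 : (0:ℝ) ⊔ v < 1 := by simp [hv]
    exact lt_of_le_of_lt this h2
  exact intervalIntegral.integral_hasDerivAt_right ((hf.mono hsub).intervalIntegrable)
    (hf.stronglyMeasurableAtFilter isOpen_Iio v hv) (hf.continuousAt (Iio_mem_nhds hv))

lemma aux_A_lower (f : ℝ → ℝ) (lam : ℝ) (hf : ContinuousOn f (Iio 1))
    (hflow : ∀ v, 0 ≤ v → v < 1 → 1 / (lam * (1 - v)) ≤ f v)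
    (v : ℝ) (hv0 : 0 ≤ v) (hv : v < 1) :
    -(Real.log (1 - v)) / lam ≤ ∫ w in (0:ℝ)..v, f w := by
  have hd : ∀ x, x < 1 → HasDerivAt (fun x => (∫ w in (0:ℝ)..x, f w) + Real.log (1 - x) / lam)
      (f x - 1 / (lam * (1 - x))) x := by
    intro x hx
    have h1 : HasDerivAt (fun x : ℝ => Real.log (1 - x)) (-1 / (1 - x)) x :=
      ((hasDerivAt_id x).const_sub 1).log (by simp; linarith)
    refine ((aux_deriv f hf x hx).add (h1.div_const lam)).congr_deriv ?_
    rw [div_div, mul_comm lam, neg_div]; ring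
  have hm : MonotoneOn (fun x => (∫ w in (0:ℝ)..x, f w) + Real.log (1 - x) / lam) (Ico 0 1) := by
    apply monotoneOn_of_deriv_nonneg (convex_Ico 0 1)
    · intro x hx
      exact (hd x hx.2).continuousAt.continuousWithinAt
    · intro x hx
      rw [interior_Ico] at hx
      exact (hd x hx.2).differentiableAt.differentiableWithinAt
    · intro x hx
      rw [interior_Ico] at hx
      rw [(hd x hx.2).deriv]
      linarith [hflow x hx.1.le hx.2]
  have := hm (⟨le_rfl, zero_lt_one⟩ : (0:ℝ) ∈ Ico (0:ℝ) 1) ⟨hv0, hv⟩ hv0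
  simp at this
  rw [neg_div]; linarith

lemma aux_A_top (f : ℝ → ℝ) (lam : ℝ) (hlam : 0 < lam) (hf : ContinuousOn f (Iio 1))
    (hflow : ∀ v, 0 ≤ v → v < 1 → 1 / (lam * (1 - v)) ≤ f v) :
    Tendsto (fun v => ∫ w in (0:ℝ)..v, f w) (nhdsWithin 1 (Iio 1)) atTop := by
  have h1 : Tendsto (fun v : ℝ => -(Real.log (1 - v)) / lam) (nhdsWithin 1 (Iio 1)) atTop := by
    have h2 : Tendsto (fun v : ℝ => 1 - v) (nhdsWithin 1 (Iio 1)) (nhdsWithin 0 (Ioi 0)) := by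
      apply tendsto_nhdsWithin_of_tendsto_nhds_of_eventually_within
      · have : Tendsto (fun v : ℝ => 1 - v) (nhds 1) (nhds (1 - 1)) :=
          (continuous_const.sub continuous_id).tendsto 1
        rw [sub_self] at this
        exact this.mono_left nhdsWithin_le_nhds
      · filter_upwards [self_mem_nhdsWithin] with v hv
        simpa using hv
    exact (tendsto_neg_atBot_atTop.comp (Real.tendsto_log_nhdsGT_zero.comp h2)).atTop_div_const hlam
  refine tendsto_atTop_mono' _ ?_ h1
  filter_upwards [Ioo_mem_nhdsLT (zero_lt_one : (0:ℝ) < 1)] with v hv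
  exact aux_A_lower f lam hf hflow v hv.1.le hv.2

lemma aux_mass (f : ℝ → ℝ) (lam : ℝ) (hlam : 0 < lam) (hf : ContinuousOn f (Iio 1))
    (hflow : ∀ v, 0 ≤ v → v < 1 → 1 / (lam * (1 - v)) ≤ f v) (q : ℝ) (hq : 0 < q) :
    ∫ v in Ioo (0:ℝ) 1, q * Real.exp (-(q * ∫ w in (0:ℝ)..v, f w)) * f v = 1 := by
  set A : ℝ → ℝ := fun v => ∫ w in (0:ℝ)..v, f w with hA
  set H : ℝ → ℝ := fun v => if v < 1 then -Real.exp (-(q * A v)) else 0 with hH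
  have hfpos : ∀ v, 0 ≤ v → v < 1 → 0 < f v := fun v h0 h1 =>
    lt_of_lt_of_le (by have : 0 < 1 - v := by linarith
                       positivity) (hflow v h0 h1)
  have hd : ∀ x, x < 1 → HasDerivAt H (q * Real.exp (-(q * A x)) * f x) x := by
    intro x hx
    have h1 : HasDerivAt (fun v => -Real.exp (-(q * A v))) (q * Real.exp (-(q * A x)) * f x) x := by
      refine (((aux_deriv f hf x hx).const_mul q).neg.exp).neg.congr_deriv ?_
      simp only [hA, Pi.neg_apply]; ring
    apply h1.congr_of_eventuallyEq
    filter_upwards [Iio_mem_nhds hx] with y hy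
    simp only [hH]; rw [if_pos (mem_Iio.1 hy)]
  have hc : ContinuousOn H (Icc 0 1) := by
    intro x hx
    rcases lt_or_eq_of_le hx.2 with h | h
    · exact (hd x h).continuousAt.continuousWithinAt
    · subst h
      have : ContinuousWithinAt H (Iic 1) 1 := by
        rw [← continuousWithinAt_Iio_iff_Iic]
        have h1 : H 1 = 0 := by simp [hH]
        rw [ContinuousWithinAt, h1]
        have h2 : Tendsto (fun v => -Real.exp (-(q * A v))) (nhdsWithin 1 (Iio 1)) (nhds (-0)) :=
          (Real.tendsto_exp_atBot.comp (tendsto_neg_atTop_atBot.comp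
            ((aux_A_top f lam hlam hf hflow).const_mul_atTop hq))).neg
        rw [neg_zero] at h2
        refine h2.congr' ?_
        filter_upwards [self_mem_nhdsWithin] with y hy
        simp only [hH]; rw [if_pos (mem_Iio.1 hy)]
      exact this.mono (fun y hy => hy.2)
  have hint := intervalIntegral.integrableOn_deriv_of_nonneg hc (fun x hx => hd x hx.2)
    (fun x hx => by have := hfpos x hx.1.le hx.2; positivity)
  have := intervalIntegral.integral_eq_sub_of_hasDerivAt_of_le zero_le_one hc
    (fun x hx => hd x hx.2) ((intervalIntegrable_iff_integrableOn_Ioc_of_le zero_le_one).2 hint)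
  rw [intervalIntegral.integral_of_le zero_le_one, integral_Ioc_eq_integral_Ioo] at this
  rw [this]
  simp [hH, hA]

lemma aux_peak (f : ℝ → ℝ) (lam : ℝ) (hlam : 0 < lam) (hf : ContinuousOn f (Iio 1))
    (hflow : ∀ v, 0 ≤ v → v < 1 → 1 / (lam * (1 - v)) ≤ f v)
    (K : ℝ → ℝ) (hK : ContinuousOn K (Ioo 0 1)) (hKb : ∀ v ∈ Ioo (0:ℝ) 1, |K v| ≤ 1) (L : ℝ)
    (hL : Tendsto K (𝓝[<] 1) (𝓝 L)) :
    Tendsto (fun q : ℝ => ∫ v in Ioo (0:ℝ) 1, (q * Real.exp (-(q * ∫ w in (0:ℝ)..v, f w)) * f v) • K v)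
      (𝓝[>] 0) (𝓝 L) := by
  have hfpos : ∀ v, 0 ≤ v → v < 1 → 0 < f v := fun v h0 h1 =>
    lt_of_lt_of_le (by have : 0 < 1 - v := by linarith
                       positivity) (hflow v h0 h1)
  have hAc : ContinuousOn (fun v => ∫ w in (0:ℝ)..v, f w) (Ioo 0 1) := fun x hx =>
    (aux_deriv f hf x hx.2).continuousAt.continuousWithinAt
  have hA0 : ∀ v, 0 ≤ v → v < 1 → 0 ≤ ∫ w in (0:ℝ)..v, f w := fun v h0 h1 =>
    intervalIntegral.integral_nonneg h0 (fun u hu => (hfpos u hu.1 (lt_of_le_of_lt hu.2 h1)).le)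
  have hnhds : 𝓝[Ioo 0 1] (1:ℝ) = 𝓝[<] 1 := nhdsWithin_Ioo_eq_nhdsLT zero_lt_one
  refine tendsto_setIntegral_peak_smul_of_integrableOn_of_tendsto (μ := volume) (s := Ioo (0:ℝ) 1)
    (t := Ioo (0:ℝ) 1) (x₀ := 1) measurableSet_Ioo measurableSet_Ioo subset_rfl self_mem_nhdsWithin
    (by simp) ?_ ?_ ?_ ?_ ?_ (by rw [hnhds]; exact hL)
  · filter_upwards [self_mem_nhdsWithin] with q hq x hx
    have := hfpos x hx.1.le hx.2
    have hq : 0 < q := hq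
    positivity
  · intro u hu h1u
    obtain ⟨b, hb1, hbu⟩ : ∃ b < (1:ℝ), Ioc b 1 ⊆ u := exists_Ioc_subset_of_mem_nhds (hu.mem_nhds h1u) ⟨0, zero_lt_one⟩
    have hcomp : ContinuousOn f (Icc 0 b) := hf.mono (fun x hx => lt_of_le_of_lt hx.2 hb1)
    obtain ⟨M, hM⟩ := isCompact_Icc.exists_bound_of_continuousOn hcomp
    rw [Metric.tendstoUniformlyOn_iff]
    intro ε hε
    have hM' : 0 < |M| + 1 := by positivity
    filter_upwards [Ioo_mem_nhdsGT (div_pos hε hM')] with q hq x hx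
    have hxb : x ≤ b := by
      by_contra h
      exact hx.2 (hbu ⟨not_le.1 h, hx.1.2.le⟩)
    have hfx := hfpos x hx.1.1.le hx.1.2
    have hfM := hM x ⟨hx.1.1.le, hxb⟩
    rw [Real.norm_eq_abs, abs_of_pos hfx] at hfM
    have hfM2 : f x < |M| + 1 := by linarith [le_abs_self M]
    have he : Real.exp (-(q * ∫ w in (0:ℝ)..x, f w)) ≤ 1 := by
      rw [Real.exp_le_one_iff]
      have := mul_nonneg hq.1.le (hA0 x hx.1.1.le hx.1.2)
      linarith
    have hq0 := hq.1
    rw [Pi.zero_apply, dist_zero_left, Real.norm_eq_abs, abs_of_nonneg (by positivity)]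
    have hq2 := (lt_div_iff₀ hM').1 hq.2
    calc q * Real.exp (-(q * ∫ w in (0:ℝ)..x, f w)) * f x ≤ q * 1 * (|M| + 1) := by gcongr
      _ < ε := by linarith
  · refine tendsto_const_nhds.congr' ?_
    filter_upwards [self_mem_nhdsWithin] with q hq
    exact (aux_mass f lam hlam hf hflow q hq).symm
  · filter_upwards with q
    apply ContinuousOn.aestronglyMeasurable _ measurableSet_Ioo
    exact (continuousOn_const.mul (Real.continuous_exp.comp_continuousOn
      (continuousOn_const.mul hAc).neg)).mul (hf.mono (fun x hx => hx.2))
  · refine Integrable.of_bound (hK.aestronglyMeasurable measurableSet_Ioo) 1 ?_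
    filter_upwards [self_mem_ae_restrict measurableSet_Ioo] with x hx
    exact hKb x hx

lemma aux_G (g : ℝ → ℝ) (θ : ℝ) (hθ0 : 0 ≤ θ) (hθ1 : θ < 1)
    (hgc : ContinuousOn g (Ioo 0 1))
    (hint : ∀ v ∈ Ioo (0:ℝ) 1, IntervalIntegrable g volume θ v)
    (hg1 : ∀ v ∈ Ioo θ 1, 0 ≤ g v) :
    Tendsto (fun v => Real.exp (-∫ w in θ..v, g w)) (𝓝[<] 1)
      (𝓝 (if (∫⁻ w in Ioo θ 1, ENNReal.ofReal (g w)) = ⊤ then 0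
          else Real.exp (-(∫⁻ w in Ioo θ 1, ENNReal.ofReal (g w)).toReal))) := by
  have hmeas : AEMeasurable (fun w => ENNReal.ofReal (g w)) (volume.restrict (Ioo θ 1)) :=
    ((hgc.mono (Ioo_subset_Ioo_left hθ0)).aemeasurable measurableSet_Ioo).ennreal_ofReal
  have hcov : AECover (volume.restrict (Ioo θ 1)) (𝓝[<] (1:ℝ)) (fun v : ℝ => Ioc θ v) :=
    aecover_Ioo_of_Ioc (a := fun _ => θ) (b := fun v => v) tendsto_const_nhds
      (tendsto_id.mono_left nhdsWithin_le_nhds)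
  have hlim := hcov.lintegral_tendsto_of_countably_generated hmeas
  have hnn : ∀ v ∈ Ioo θ 1, 0 ≤ ∫ w in θ..v, g w := by
    intro v hv
    rw [intervalIntegral.integral_of_le hv.1.le]
    apply setIntegral_nonneg measurableSet_Ioc
    intro x hx
    exact hg1 x ⟨hx.1, lt_of_le_of_lt hx.2 hv.2⟩
  have hlim2 : Tendsto (fun v => ENNReal.ofReal (∫ w in θ..v, g w)) (𝓝[<] 1)
      (𝓝 (∫⁻ w in Ioo θ 1, ENNReal.ofReal (g w))) := by
    refine hlim.congr' ?_
    filter_upwards [Ioo_mem_nhdsLT hθ1] with v hv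
    rw [Measure.restrict_restrict measurableSet_Ioc]
    have : Ioc θ v ∩ Ioo θ 1 = Ioc θ v := by
      apply inter_eq_left.2
      intro x hx
      exact ⟨hx.1, lt_of_le_of_lt hx.2 hv.2⟩
    rw [this, intervalIntegral.integral_of_le hv.1.le, ofReal_integral_eq_lintegral_ofReal]
    · exact (hint v ⟨lt_of_le_of_lt hθ0 hv.1, hv.2⟩).1
    · filter_upwards [self_mem_ae_restrict measurableSet_Ioc] with x hx
      exact hg1 x ⟨hx.1, lt_of_le_of_lt hx.2 hv.2⟩
  split_ifs with h
  · rw [h] at hlim2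
    have := ENNReal.tendsto_ofReal_nhds_top.1 hlim2
    exact Real.tendsto_exp_atBot.comp (tendsto_neg_atTop_atBot.comp this)
  · refine (Real.continuous_exp.tendsto _).comp (Tendsto.neg ?_)
    refine ((ENNReal.tendsto_toReal h).comp hlim2).congr' ?_
    filter_upwards [Ioo_mem_nhdsLT hθ1] with v hv
    exact ENNReal.toReal_ofReal (hnn v hv)

lemma aux_main_s14 (ρ k : ℝ → ℝ) (lam θ : ℝ) (θf : ℝ → ℝ) (hlam : 0 < lam)
    (hρc : ContinuousOn ρ (Ico 0 1)) (hρpos : ∀ v ∈ Ico (0:ℝ) 1, 0 < ρ v)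
    (hρle : ∀ v ∈ Ico (0:ℝ) 1, ρ v ≤ lam * (1 - v))
    (hkc : ContinuousOn k (Ioo 0 1)) (hθ0 : 0 ≤ θ) (hθ1 : θ < 1)
    (hint : ∀ v ∈ Ioo (0:ℝ) 1, IntervalIntegrable (fun w => k w / ρ w) volume θ v)
    (hk1 : ∀ v ∈ Ioo θ 1, 0 ≤ k v) (hk2 : ∀ v ∈ Ioo 0 θ, k v ≤ 0)
    (hθf : ∀ᶠ q in 𝓝[>] 0, θf q ∈ Ico 0 1)
    (hθfint : ∀ᶠ q in 𝓝[>] 0, IntervalIntegrable (fun w => k w / ρ w) volume θ (θf q))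
    (hθflim : Tendsto θf (𝓝[>] 0) (𝓝 θ))
    (hC : Tendsto (fun q => ∫ w in θ..θf q, k w / ρ w) (𝓝[>] 0) (𝓝 0)) (a : ℕ) :
    Tendsto (fun q : ℝ => q * ∫ v in (0:ℝ)..1,
        Real.exp (-∫ w in (θf q)..v, (q + k w) / ρ w) / ρ v * v ^ a) (𝓝[>] 0)
      (𝓝 (if (∫⁻ w in Ioo θ 1, ENNReal.ofReal (k w / ρ w)) = ⊤ then 0
          else Real.exp (-(∫⁻ w in Ioo θ 1, ENNReal.ofReal (k w / ρ w)).toReal))) := by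
  have hIsub : Ioo (0:ℝ) 1 ⊆ Ico 0 1 := Ioo_subset_Ico_self
  set g : ℝ → ℝ := fun w => k w / ρ w with hg
  have hgc : ContinuousOn g (Ioo 0 1) :=
    hkc.div (hρc.mono hIsub) (fun x hx => (hρpos x (hIsub hx)).ne')
  have hg1 : ∀ v ∈ Ioo θ 1, 0 ≤ g v := fun v hv =>
    div_nonneg (hk1 v hv) (hρpos v ⟨hθ0.trans hv.1.le, hv.2⟩).le
  have hg2 : ∀ v ∈ Ioo 0 θ, g v ≤ 0 := fun v hv =>
    div_nonpos_of_nonpos_of_nonneg (hk2 v hv) (hρpos v ⟨hv.1.le, hv.2.trans hθ1⟩).le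
  set f : ℝ → ℝ := fun w => 1 / ρ (max w 0) with hf
  have hmax : ∀ w : ℝ, w < 1 → max w 0 ∈ Ico (0:ℝ) 1 := fun w hw =>
    ⟨le_max_right _ _, max_lt hw zero_lt_one⟩
  have hfc : ContinuousOn f (Iio 1) := by
    apply continuousOn_const.div
    · exact hρc.comp (by fun_prop) (fun w hw => hmax w hw)
    · intro w hw
      exact (hρpos _ (hmax w hw)).ne'
  have hfeq : ∀ w, 0 ≤ w → f w = 1 / ρ w := fun w hw => by simp only [hf]; rw [max_eq_left hw]
  have hflow : ∀ v, 0 ≤ v → v < 1 → 1 / (lam * (1 - v)) ≤ f v := by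
    intro v h0 h1
    rw [hfeq v h0]
    exact one_div_le_one_div_of_le (hρpos v ⟨h0, h1⟩) (hρle v ⟨h0, h1⟩)
  set A : ℝ → ℝ := fun v => ∫ w in (0:ℝ)..v, f w with hA
  have hfint : ∀ x y : ℝ, x < 1 → y < 1 → IntervalIntegrable f volume x y := by
    intro x y hx hy
    apply (hfc.mono _).intervalIntegrable
    intro z hz
    exact lt_of_le_of_lt hz.2 (max_lt hx hy)
  set K : ℝ → ℝ := fun v => Real.exp (-∫ w in θ..v, g w) * v ^ a with hK
  have hKc : ContinuousOn K (Ioo 0 1) := by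
    intro v hv
    have : HasDerivAt (fun v => ∫ w in θ..v, g w) (g v) v :=
      intervalIntegral.integral_hasDerivAt_right (hint v hv)
        (hgc.stronglyMeasurableAtFilter isOpen_Ioo v hv) (hgc.continuousAt (Ioo_mem_nhds hv.1 hv.2))
    exact ((Real.continuous_exp.continuousAt.comp this.continuousAt.neg).mul
      (by fun_prop)).continuousWithinAt
  have hKb : ∀ v ∈ Ioo (0:ℝ) 1, |K v| ≤ 1 := by
    intro v hv
    have h0 : 0 ≤ ∫ w in θ..v, g w := by
      rcases le_total θ v with h | h
      · rw [intervalIntegral.integral_of_le h]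
        apply setIntegral_nonneg measurableSet_Ioc
        intro x hx
        exact hg1 x ⟨hx.1, lt_of_le_of_lt hx.2 hv.2⟩
      · rw [intervalIntegral.integral_of_ge h, integral_Ioc_eq_integral_Ioo]
        have := setIntegral_nonpos (μ := volume) (f := g) (measurableSet_Ioo (a := v) (b := θ))
          (fun x hx => hg2 x ⟨hv.1.trans hx.1, hx.2⟩)
        linarith
    have hv0 := hv.1.le
    rw [abs_of_nonneg (by positivity)]
    exact mul_le_one₀ (Real.exp_le_one_iff.2 (by linarith)) (by positivity)
      (pow_le_one₀ hv.1.le hv.2.le)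
  have hKlim := (aux_G g θ hθ0 hθ1 hgc hint hg1).mul
    (((continuous_pow a).tendsto (1:ℝ)).mono_left (nhdsWithin_le_nhds (s := Iio 1)))
  rw [one_pow, mul_one] at hKlim
  have hpeak := aux_peak f lam hlam hfc hflow K hKc hKb _ hKlim
  have hAθ : Tendsto (fun q => A (θf q)) (𝓝[>] 0) (𝓝 (A θ)) :=
    ((aux_deriv f hfc θ hθ1).continuousAt.tendsto).comp hθflim
  have hq0 : Tendsto (fun q : ℝ => q) (𝓝[>] 0) (𝓝 0) := tendsto_id.mono_left nhdsWithin_le_nhds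
  have hE := (Real.continuous_exp.tendsto _).comp ((hq0.mul hAθ).add hC)
  have hfin := hE.mul hpeak
  simp only [zero_mul, add_zero, Real.exp_zero, one_mul] at hfin
  refine hfin.congr' ?_
  filter_upwards [hθf, hθfint] with q h1 h2
  rw [intervalIntegral.integral_of_le zero_le_one, integral_Ioc_eq_integral_Ioo,
    Function.comp_apply, ← integral_const_mul, ← integral_const_mul]
  apply setIntegral_congr_fun measurableSet_Ioo
  intro v hv
  have key : ∫ w in (θf q)..v, (q + k w) / ρ w
      = q * (A v - A (θf q)) + ((∫ w in θ..v, g w) - ∫ w in θ..θf q, g w) := by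
    have e1 : ∫ w in (θf q)..v, (q + k w) / ρ w = ∫ w in (θf q)..v, (q * f w + g w) := by
      apply intervalIntegral.integral_congr
      intro w hw
      have : 0 ≤ w := le_trans (le_min h1.1 hv.1.le) hw.1
      simp only [hfeq w this, hg]
      ring
    rw [e1, intervalIntegral.integral_add ((hfint _ _ h1.2 hv.2).const_mul q)
      (h2.symm.trans (hint v hv)), intervalIntegral.integral_const_mul,
      intervalIntegral.integral_interval_sub_left (hfint _ _ zero_lt_one hv.2)
        (hfint _ _ zero_lt_one h1.2),
      intervalIntegral.integral_interval_sub_left (hint v hv) h2]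
  have hfv : f v = (ρ v)⁻¹ := by rw [hfeq v hv.1.le, one_div]
  change Real.exp (q * A (θf q) + ∫ w in θ..θf q, g w) * ((q * Real.exp (-(q * A v)) * f v) *
    (Real.exp (-∫ w in θ..v, g w) * v ^ a)) =
    q * (Real.exp (-∫ w in (θf q)..v, (q + k w) / ρ w) / ρ v * v ^ a)
  rw [key, hfv]
  generalize (∫ w in θ..v, g w) = X
  generalize (∫ w in θ..θf q, g w) = Y
  rw [show -(q * (A v - A (θf q)) + (X - Y)) = (q * A (θf q) + Y) + (-(q * A v)) + (-X) by ring,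
    Real.exp_add (q * A (θf q) + Y + _), Real.exp_add (q * A (θf q) + Y), div_eq_mul_inv]
  ring

lemma aux_summable_s14 (r : ℕ → ℝ) (hr : ∀ k, 0 ≤ r k) (hs : Summable r) (z : ℝ) (hz : z ∈ Icc (0:ℝ) 1) :
    Summable (fun k => r k * z ^ k) :=
  Summable.of_nonneg_of_le (fun k => mul_nonneg (hr k) (pow_nonneg hz.1 k))
    (fun k => mul_le_of_le_one_right (hr k) (pow_le_one₀ hz.1 hz.2)) hs

lemma aux_pgf_cont (r : ℕ → ℝ) (hr : ∀ k, 0 ≤ r k) (hs : Summable r) :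
    ContinuousOn (fun z : ℝ => ∑' k, r k * z ^ k) (Icc 0 1) := by
  refine continuousOn_tsum (u := r) (fun i => by fun_prop) hs ?_
  intro n x hx
  rw [Real.norm_eq_abs, abs_of_nonneg (mul_nonneg (hr n) (pow_nonneg hx.1 n))]
  exact mul_le_of_le_one_right (hr n) (pow_le_one₀ hx.1 hx.2)

lemma aux_pgf_le (r : ℕ → ℝ) (hr : ∀ k, 0 ≤ r k) (hs : Summable r) (z : ℝ) (hz : z ∈ Icc (0:ℝ) 1) :
    ∑' k, r k * z ^ k ≤ ∑' k, r k :=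
  (aux_summable_s14 r hr hs z hz).tsum_le_tsum
    (fun k => mul_le_of_le_one_right (hr k) (pow_le_one₀ hz.1 hz.2)) hs

lemma aux_convex_s14 (rneg : ℝ) (r : ℕ → ℝ) (hrneg : 0 ≤ rneg) (hr : ∀ k, 0 ≤ r k) (hs : Summable r) :
    ConvexOn ℝ (Ioc 0 1) (rtilde rneg r) := by
  have hsub : Ioc (0:ℝ) 1 ⊆ Icc 0 1 := Ioc_subset_Icc_self
  have h1 : ConvexOn ℝ (Ioc 0 1) (fun z : ℝ => rneg / z) := by
    have := ((convexOn_zpow (𝕜 := ℝ) (-1)).subset (fun x hx => hx.1)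
      (convex_Ioc 0 1)).smul hrneg
    simpa [div_eq_mul_inv] using this
  have h2 : ConvexOn ℝ (Ioc 0 1) (fun z : ℝ => ∑' k, r k * z ^ k) := by
    refine ⟨convex_Ioc 0 1, ?_⟩
    intro x hx y hy s t hs' ht hst
    have hxy := convex_Ioc (0:ℝ) 1 hx hy hs' ht hst
    simp only [smul_eq_mul] at hxy ⊢
    have sx := aux_summable_s14 r hr hs x (hsub hx)
    have sy := aux_summable_s14 r hr hs y (hsub hy)
    rw [← tsum_mul_left, ← tsum_mul_left, ← (sx.mul_left s).tsum_add (sy.mul_left t)]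
    refine (aux_summable_s14 r hr hs _ (hsub hxy)).tsum_le_tsum ?_ ((sx.mul_left s).add (sy.mul_left t))
    intro k
    have := (convexOn_pow (𝕜 := ℝ) k).2 (mem_Ici.2 hx.1.le) (mem_Ici.2 hy.1.le) hs' ht hst
    simp only [smul_eq_mul] at this
    calc r k * (s * x + t * y) ^ k ≤ r k * (s * x ^ k + t * y ^ k) :=
          mul_le_mul_of_nonneg_left this (hr k)
      _ = _ := by ring
  exact h1.add h2

theorem stmt14 (lam mu rneg : ℝ) (p r : ℕ → ℝ) (φ θ : ℝ) (θf : ℝ → ℝ)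
    (hlam : 0 < lam)
    (hp : ∀ k, 0 ≤ p k) (hpsum : ∑' k, p k = 1) (hp0 : 0 < p 0) (hp1 : p 1 = 0)
    (hφ0 : 0 < φ) (hφfix : ptilde p φ = φ)
    (hφlo : ∀ z : ℝ, 0 < z → z < φ → z < ptilde p z)
    (hφeq : φ = 1)
    (hmu : 0 < mu) (hrneg : 0 ≤ rneg) (hr : ∀ k, 0 ≤ r k) (hr0 : r 0 = 0)
    (hrsum : rneg + ∑' k, r k = 1)
    -- characterization of `θ_q = θf q` for `q > 0`
    (hθfpos : 0 < mu * rneg → ∀ q : ℝ, 0 < q →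
      θf q ∈ Set.Ioo (0:ℝ) 1 ∧ q = mu * (rtilde rneg r (θf q) - 1))
    (hθfzero : mu * rneg = 0 → ∀ q : ℝ, 0 < q → θf q = 0)
    -- characterization of `θ`
    (hθpos : 0 < mu * rneg → θ ∈ Set.Ioc (0:ℝ) 1 ∧ rtilde rneg r θ = 1 ∧
      ∀ z ∈ Set.Ioc (0:ℝ) 1, rtilde rneg r z = 1 → θ ≤ z)
    (hθzero : mu * rneg = 0 → θ = 0)
    (hθlt : θ < 1) :
    ∀ a : ℕ,
      Filter.Tendsto (fun q => Phi lam mu p rneg r φ (θf q) q a)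
        (nhdsWithin 0 (Set.Ioi 0))
        (nhds (if (∫⁻ w in Set.Ioo θ 1,
            ENNReal.ofReal (mu * (1 - rtilde rneg r w) / (lam * (ptilde p w - w)))) = ⊤
          then 0
          else Real.exp (-(∫⁻ w in Set.Ioo θ 1,
            ENNReal.ofReal (mu * (1 - rtilde rneg r w)
              / (lam * (ptilde p w - w)))).toReal))) := by
  intro a
  subst hφeq
  have hps : Summable p := by
    by_contra h
    rw [tsum_eq_zero_of_not_summable h] at hpsum
    norm_num at hpsum
  have hrs : Summable r := by
    by_contra h
    rw [tsum_eq_zero_of_not_summable h, add_zero] at hrsum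
    subst hrsum
    obtain ⟨h1, h2, -⟩ := hθpos (by linarith)
    have h3 : 0 ≤ ∑' k, r k * θ ^ k := tsum_nonneg fun k => mul_nonneg (hr k) (pow_nonneg h1.1.le k)
    have h4 : 1 < 1 / θ := (one_lt_div h1.1).2 hθlt
    unfold rtilde at h2
    linarith
  have hpc : ContinuousOn (ptilde p) (Icc 0 1) := aux_pgf_cont p hp hps
  have hgt : ∀ v ∈ Ico (0:ℝ) 1, v < ptilde p v := by
    intro v hv
    rcases hv.1.eq_or_lt with h | h
    · subst h
      have : ptilde p 0 = p 0 := by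
        unfold ptilde
        rw [tsum_eq_single 0]
        · simp
        · intro b hb; simp [hb]
      rw [this]; exact hp0
    · exact hφlo v h hv.2
  have hple : ∀ v ∈ Ico (0:ℝ) 1, ptilde p v ≤ 1 := fun v hv => by
    rw [← hpsum]; exact aux_pgf_le p hp hps v (Ico_subset_Icc_self hv)
  set ρ : ℝ → ℝ := fun v => lam * |ptilde p v - v| with hρ
  set k : ℝ → ℝ := fun v => mu * (1 - rtilde rneg r v) with hk
  have hρc : ContinuousOn ρ (Ico 0 1) :=
    continuousOn_const.mul (((hpc.mono Ico_subset_Icc_self).sub continuousOn_id).abs)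
  have hρeq : ∀ v ∈ Ico (0:ℝ) 1, ρ v = lam * (ptilde p v - v) := fun v hv => by
    simp only [hρ]; rw [abs_of_pos (by linarith [hgt v hv])]
  have hρpos : ∀ v ∈ Ico (0:ℝ) 1, 0 < ρ v := fun v hv => by
    rw [hρeq v hv]; exact mul_pos hlam (by linarith [hgt v hv])
  have hρle : ∀ v ∈ Ico (0:ℝ) 1, ρ v ≤ lam * (1 - v) := fun v hv => by
    rw [hρeq v hv]; exact mul_le_mul_of_nonneg_left (by linarith [hple v hv]) hlam.le
  have hrc : ContinuousOn (rtilde rneg r) (Ioo 0 1) := by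
    apply ContinuousOn.add
    · exact continuousOn_const.div continuousOn_id (fun x hx => hx.1.ne')
    · exact (aux_pgf_cont r hr hrs).mono Ioo_subset_Icc_self
  have hkc : ContinuousOn k (Ioo 0 1) := continuousOn_const.mul (continuousOn_const.sub hrc)
  have hgc : ContinuousOn (fun w => k w / ρ w) (Ioo 0 1) :=
    hkc.div (hρc.mono Ioo_subset_Ico_self) (fun x hx => (hρpos x (Ioo_subset_Ico_self hx)).ne')
  have hL : (∫⁻ w in Set.Ioo θ 1,
      ENNReal.ofReal (mu * (1 - rtilde rneg r w) / (lam * (ptilde p w - w))))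
      = ∫⁻ w in Ioo (max θ 0) 1, ENNReal.ofReal (k w / ρ w) := by
    have h0 : 0 ≤ θ := by
      rcases (mul_nonneg hmu.le hrneg).eq_or_lt with h | h
      · exact (hθzero h.symm).ge
      · exact (hθpos h).1.1.le
    rw [max_eq_left h0]
    apply setLIntegral_congr_fun measurableSet_Ioo
    intro w hw
    simp only [hk]
    rw [hρeq w ⟨h0.trans hw.1.le, hw.2⟩]
  rw [hL]
  change Tendsto (fun q : ℝ => q * ∫ v in (0:ℝ)..1,
        Real.exp (-∫ w in (θf q)..v, (q + k w) / ρ w) / ρ v * v ^ a) (𝓝[>] 0) _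
  rcases (mul_nonneg hmu.le hrneg).eq_or_lt with h | h
  · -- no culling
    have hθ := hθzero h.symm
    have hr_zero : rneg = 0 := by
      rcases mul_eq_zero.1 h.symm with h' | h'
      · exact absurd h' hmu.ne'
      · exact h'
    subst hθ
    rw [max_self]
    subst hr_zero
    have hkc' : ContinuousOn k (Ico 0 1) := by
      have : ContinuousOn (rtilde 0 r) (Ico 0 1) := by
        unfold rtilde
        simp only [zero_div, zero_add]
        exact (aux_pgf_cont r hr hrs).mono Ico_subset_Icc_self
      exact continuousOn_const.mul (continuousOn_const.sub this)
    have hev : ∀ᶠ q in 𝓝[>] (0:ℝ), θf q = 0 := by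
      filter_upwards [self_mem_nhdsWithin] with q hq
      exact hθfzero h.symm q hq
    apply aux_main_s14 ρ k lam 0 θf hlam hρc hρpos hρle hkc le_rfl hθlt
    · intro v hv
      apply ContinuousOn.intervalIntegrable
      have hsub : uIcc 0 v ⊆ Ico 0 1 := by
        rw [uIcc_of_le hv.1.le]
        intro x hx
        exact ⟨hx.1, lt_of_le_of_lt hx.2 hv.2⟩
      exact (hkc'.mono hsub).div (hρc.mono hsub) (fun x hx => (hρpos x (hsub hx)).ne')
    · intro v hv
      apply mul_nonneg hmu.le
      have := aux_pgf_le r hr hrs v (Ioo_subset_Icc_self hv)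
      simp only [rtilde, zero_div]
      linarith
    · intro v hv
      exact absurd (hv.1.trans hv.2) (lt_irrefl _)
    · filter_upwards [hev] with q hq
      rw [hq]; exact ⟨le_rfl, zero_lt_one⟩
    · filter_upwards [hev] with q hq
      rw [hq]
    · exact tendsto_const_nhds.congr' (hev.mono fun q hq => hq.symm)
    · refine tendsto_const_nhds.congr' (hev.mono fun q hq => ?_)
      simp [hq]
  · obtain ⟨hθ, hθ1, hθmin⟩ := hθpos h
    rw [max_eq_left hθ.1.le]
    have hconv := aux_convex_s14 rneg r hrneg hr hrs
    have hone : rtilde rneg r 1 = 1 := by simp [rtilde, hrsum]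
    have h1mem : (1:ℝ) ∈ Ioc (0:ℝ) 1 := ⟨zero_lt_one, le_rfl⟩
    have hup : ∀ v ∈ Icc θ 1, rtilde rneg r v ≤ 1 := by
      intro v hv
      have := hconv.le_on_segment hθ h1mem (z := v) (by
        rw [segment_eq_Icc hθlt.le]; exact hv)
      rwa [hθ1, hone, max_self] at this
    have hlo : ∀ v ∈ Ioo 0 θ, 1 < rtilde rneg r v := by
      intro v hv
      have hvm : v ∈ Ioc (0:ℝ) 1 := ⟨hv.1, (hv.2.trans hθlt).le⟩
      rcases lt_trichotomy (rtilde rneg r v) 1 with h' | h' | h'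
      · exfalso
        have hs := hconv.slope_mono_adjacent hvm h1mem hv.2 hθlt
        rw [hθ1, hone, sub_self, zero_div] at hs
        have : 0 < (1 - rtilde rneg r v) / (θ - v) :=
          div_pos (by linarith) (by linarith [hv.2])
        linarith
      · exact absurd (hθmin v hvm h') (not_le.2 hv.2)
      · exact h'
    have hθflt : ∀ q, 0 < q → θf q ∈ Ioo 0 θ := by
      intro q hq
      obtain ⟨h1, h2⟩ := hθfpos h q hq
      refine ⟨h1.1, ?_⟩
      by_contra hh
      have := hup _ ⟨not_lt.1 hh, h1.2.le⟩
      have : mu * (rtilde rneg r (θf q) - 1) ≤ 0 :=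
        mul_nonpos_of_nonneg_of_nonpos hmu.le (by linarith)
      linarith
    have hlim : Tendsto θf (𝓝[>] 0) (𝓝 θ) := by
      rw [tendsto_order]
      constructor
      · intro b hb
        set c := max b (θ / 2) with hc
        have hcm : c ∈ Ioo 0 θ := ⟨lt_of_lt_of_le (by linarith [hθ.1]) (le_max_right _ _),
          max_lt hb (by linarith [hθ.1])⟩
        have hpos : 0 < mu * (rtilde rneg r c - 1) := mul_pos hmu (by linarith [hlo c hcm])
        filter_upwards [Ioo_mem_nhdsGT hpos] with q hq
        refine lt_of_le_of_lt (le_max_left b (θ / 2)) ?_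
        by_contra hh
        have hm := hθflt q hq.1
        have h2 := (hθfpos h q hq.1).2
        have h3 := hconv.le_on_segment (x := θf q) (y := θ)
          ⟨hm.1, (hm.2.trans hθlt).le⟩ hθ (z := c) (by
            rw [segment_eq_Icc hm.2.le]; exact ⟨not_lt.1 hh, hcm.2.le⟩)
        rw [hθ1, max_eq_left (hlo _ hm).le] at h3
        have := mul_le_mul_of_nonneg_left h3 hmu.le
        have := hq.2
        linarith
      · intro b hb
        filter_upwards [self_mem_nhdsWithin] with q hq
        exact (hθflt q hq).2.trans hb
    have hint : ∀ v ∈ Ioo (0:ℝ) 1, IntervalIntegrable (fun w => k w / ρ w) volume θ v := by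
      intro v hv
      apply (hgc.mono _).intervalIntegrable
      intro x hx
      exact ⟨lt_of_lt_of_le (lt_min hθ.1 hv.1) hx.1, lt_of_le_of_lt hx.2 (max_lt hθlt hv.2)⟩
    apply aux_main_s14 ρ k lam θ θf hlam hρc hρpos hρle hkc hθ.1.le hθlt hint
    · intro v hv
      exact mul_nonneg hmu.le (by linarith [hup v ⟨hv.1.le, hv.2.le⟩])
    · intro v hv
      exact mul_nonpos_of_nonneg_of_nonpos hmu.le (by linarith [hlo v hv])
    · filter_upwards [self_mem_nhdsWithin] with q hq
      exact ⟨(hθflt q hq).1.le, (hθflt q hq).2.trans hθlt⟩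
    · filter_upwards [self_mem_nhdsWithin] with q hq
      exact hint _ ⟨(hθflt q hq).1, (hθflt q hq).2.trans hθlt⟩
    · exact hlim
    · have hm : θ ∈ Ioo (0:ℝ) 1 := ⟨hθ.1, hθlt⟩
      have : HasDerivAt (fun v => ∫ w in θ..v, k w / ρ w) (k θ / ρ θ) θ :=
        intervalIntegral.integral_hasDerivAt_right (hint θ hm)
          (hgc.stronglyMeasurableAtFilter isOpen_Ioo θ hm)
          (hgc.continuousAt (Ioo_mem_nhds hm.1 hm.2))
      have h2 := this.continuousAt.tendsto.comp hlim
      simp only [intervalIntegral.integral_same] at h2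
      exact h2
end

section
/- Assume μ = 0 and let q ∈ (0,∞) (so θ_q = 0 < φ*). Then Φ_q(a) − Φ_q(a + 1) > 0 for every a ∈ ℕ₀, and for all a ∈ ℕ₀, x ∈ ℕ₀ with x ≤ a, and f ∈ ℕ with f > a + 1 − x: f + Φ_q(x + f)/(Φ_q(a) − Φ_q(a + 1)) ≥ a + 1 − x + Φ_q(a + 1)/(Φ_q(a) − Φ_q(a + 1)). -/
open MeasureTheory Filter Set

lemma aux_int (ρ : ℝ → ℝ) (φ q : ℝ) (hφ0 : 0 < φ) (hq : 0 < q)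
    (hρc : ContinuousOn ρ (Ico 0 φ)) (hρpos : ∀ v ∈ Ico 0 φ, 0 < ρ v) :
    IntervalIntegrable (fun v => Real.exp (-∫ w in (0:ℝ)..v, q / ρ w) / ρ v) volume 0 φ := by
  have hγ : ContinuousOn (fun w => q / ρ w) (Ico 0 φ) :=
    continuousOn_const.div hρc (fun v hv => (hρpos v hv).ne')
  have hsub : ∀ b, b < φ → Icc 0 b ⊆ Ico 0 φ := fun b hb x hx => ⟨hx.1, hx.2.trans_lt hb⟩
  have hH : ∀ b, 0 ≤ b → b < φ →
      ContinuousOn (fun v => ∫ w in (0:ℝ)..v, q / ρ w) (Icc 0 b) := by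
    intro b hb0 hb
    have := intervalIntegral.continuousOn_primitive_interval (μ := volume) (a := 0) (b := b)
      (f := fun w => q / ρ w)
      (by rw [uIcc_of_le hb0]; exact (hγ.mono (hsub b hb)).integrableOn_Icc)
    rwa [uIcc_of_le hb0] at this
  have hE : ∀ b, 0 ≤ b → b < φ →
      ContinuousOn (fun v => Real.exp (-∫ w in (0:ℝ)..v, q / ρ w)) (Icc 0 b) := fun b h0 h1 =>
    Real.continuous_exp.comp_continuousOn (hH b h0 h1).neg
  have hg : ∀ b, 0 ≤ b → b < φ →
      ContinuousOn (fun v => Real.exp (-∫ w in (0:ℝ)..v, q / ρ w) / ρ v) (Icc 0 b) :=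
    fun b h0 h1 => (hE b h0 h1).div (hρc.mono (hsub b h1))
      (fun v hv => (hρpos v (hsub b h1 hv)).ne')
  have hbd : ∀ b, 0 ≤ b → b < φ →
      (∫ v in (0:ℝ)..b, Real.exp (-∫ w in (0:ℝ)..v, q / ρ w) / ρ v) ≤ 1 / q := by
    intro b h0 h1
    have key := intervalIntegral.integral_eq_sub_of_hasDerivAt_of_le h0
      (f := fun v => -(Real.exp (-∫ w in (0:ℝ)..v, q / ρ w)) / q)
      (f' := fun v => Real.exp (-∫ w in (0:ℝ)..v, q / ρ w) / ρ v)
      ((hE b h0 h1).neg.div_const q) ?_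
      (by apply ContinuousOn.intervalIntegrable; rw [uIcc_of_le h0]; exact hg b h0 h1)
    · rw [key]
      simp only [intervalIntegral.integral_same, neg_zero, Real.exp_zero]
      rw [← sub_div]
      apply div_le_div_of_nonneg_right _ hq.le
      have := Real.exp_pos (-∫ w in (0:ℝ)..b, q / ρ w)
      linarith
    · intro x hx
      have hxφ : x < φ := hx.2.trans h1
      have hd : HasDerivAt (fun v => ∫ w in (0:ℝ)..v, q / ρ w) (q / ρ x) x := by
        apply intervalIntegral.integral_hasDerivAt_right
        · apply ContinuousOn.intervalIntegrable
          rw [uIcc_of_le hx.1.le]; exact hγ.mono (hsub x hxφ)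
        · exact (hγ.mono Ioo_subset_Ico_self).stronglyMeasurableAtFilter isOpen_Ioo x ⟨hx.1, hxφ⟩
        · exact hγ.continuousAt (Ico_mem_nhds hx.1 hxφ)
      have := (hd.neg.exp.neg).div_const q
      refine HasDerivAt.congr_deriv this ?_
      have := (hρpos x ⟨hx.1.le, hxφ⟩).ne'
      simp only [Pi.neg_apply]
      field_simp
  rw [intervalIntegrable_iff_integrableOn_Ioc_of_le hφ0.le]
  have hb0 : ∀ n : ℕ, 0 ≤ φ * (1 - 1 / ((n:ℝ) + 1)) := by
    intro n
    apply mul_nonneg hφ0.le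
    rw [sub_nonneg, div_le_one (by positivity)]
    have : (0:ℝ) ≤ n := n.cast_nonneg
    linarith
  have hb1 : ∀ n : ℕ, φ * (1 - 1 / ((n:ℝ) + 1)) < φ := by
    intro n
    have : 0 < 1 / ((n:ℝ) + 1) := by positivity
    nlinarith
  refine integrableOn_Ioc_of_intervalIntegral_norm_bounded_right (I := 1 / q) (l := atTop)
    (b := fun n : ℕ => φ * (1 - 1 / ((n:ℝ) + 1))) (fun n => ?_) ?_ (Eventually.of_forall fun n => ?_)
  · exact ((hg _ (hb0 n) (hb1 n)).integrableOn_Icc).mono_set Ioc_subset_Icc_self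
  · have := (tendsto_one_div_add_atTop_nhds_zero_nat (𝕜 := ℝ)).const_sub 1 |>.const_mul φ
    simpa using this
  · refine le_trans (le_of_eq ?_) (hbd _ (hb0 n) (hb1 n))
    rw [intervalIntegral.integral_of_le (hb0 n)]
    apply setIntegral_congr_fun measurableSet_Ioc
    intro v hv
    have := hρpos v ⟨hv.1.le, hv.2.trans_lt (hb1 n)⟩
    simp only [Real.norm_eq_abs]
    exact abs_of_pos (by positivity)

/-- with `μ = 0` (so `θ_q = 0 < φ*`): `Φ_q(a) - Φ_q(a+1) > 0` for every `a`,
and for all `a, x ∈ ℕ` with `x ≤ a` and every `f ∈ ℕ` with `f > a + 1 - x`: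
`f + Φ_q(x+f)/(Φ_q(a) - Φ_q(a+1)) ≥ a + 1 - x + Φ_q(a+1)/(Φ_q(a) - Φ_q(a+1))`. -/
theorem stmt19 (lam : ℝ) (p : ℕ → ℝ) (φ q : ℝ)
    (hlam : 0 < lam)
    (hp : ∀ k, 0 ≤ p k) (hpsum : ∑' k, p k = 1) (hp0 : 0 < p 0) (hp1 : p 1 = 0)
    (hp0lt : p 0 < 1)
    (hφ0 : 0 < φ) (hφ1 : φ ≤ 1) (hφfix : ptilde p φ = φ)
    (hφlo : ∀ z : ℝ, 0 < z → z < φ → z < ptilde p z)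
    (hφhi : ∀ z : ℝ, φ < z → z < 1 → ptilde p z < z)
    (hq : 0 < q) :
    (∀ a : ℕ, 0 < Phi lam 0 p 0 (fun _ => 0) φ 0 q a
        - Phi lam 0 p 0 (fun _ => 0) φ 0 q (a + 1)) ∧
    (∀ a x : ℕ, x ≤ a → ∀ f : ℕ, a + 1 - x < f →
      (a : ℝ) + 1 - x + Phi lam 0 p 0 (fun _ => 0) φ 0 q (a + 1)
          / (Phi lam 0 p 0 (fun _ => 0) φ 0 q a
            - Phi lam 0 p 0 (fun _ => 0) φ 0 q (a + 1))
        ≤ (f : ℝ) + Phi lam 0 p 0 (fun _ => 0) φ 0 q (x + f)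
          / (Phi lam 0 p 0 (fun _ => 0) φ 0 q a
            - Phi lam 0 p 0 (fun _ => 0) φ 0 q (a + 1))) := by
  have hs : Summable p := by
    by_contra h
    rw [tsum_eq_zero_of_not_summable h] at hpsum
    norm_num at hpsum
  have hpc : ContinuousOn (ptilde p) (Icc 0 1) := by
    unfold ptilde
    refine continuousOn_tsum (fun i => by fun_prop) hs ?_
    intro n x hx
    rw [Real.norm_eq_abs, abs_of_nonneg (mul_nonneg (hp n) (pow_nonneg hx.1 n))]
    exact mul_le_of_le_one_right (hp n) (pow_le_one₀ hx.1 hx.2)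
  have hpt0 : ptilde p 0 = p 0 := by
    unfold ptilde
    rw [tsum_eq_single 0]
    · simp
    · intro k hk; simp [hk]
  have hρpos : ∀ v ∈ Ico 0 φ, 0 < lam * |ptilde p v - v| := by
    intro v hv
    apply mul_pos hlam
    rw [abs_pos]
    rcases hv.1.eq_or_lt with h | h
    · rw [← h, hpt0]; simpa using hp0.ne'
    · exact (sub_pos.2 (hφlo v h hv.2)).ne'
  have hρc : ContinuousOn (fun v => lam * |ptilde p v - v|) (Ico 0 φ) := by
    have : ContinuousOn (ptilde p) (Ico 0 φ) :=
      hpc.mono fun x hx => ⟨hx.1, hx.2.le.trans hφ1⟩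
    exact continuousOn_const.mul (this.sub continuousOn_id).abs
  have hg := aux_int (fun v => lam * |ptilde p v - v|) φ q hφ0 hq hρc hρpos
  set g : ℝ → ℝ := fun v => Real.exp (-∫ w in (0:ℝ)..v, q / (lam * |ptilde p w - w|))
    / (lam * |ptilde p v - v|) with hgdef
  have hgpos : ∀ v ∈ Ioo 0 φ, 0 < g v := fun v hv =>
    div_pos (Real.exp_pos _) (hρpos v ⟨hv.1.le, hv.2⟩)
  have hPhi : ∀ x, Phi lam 0 p 0 (fun _ => 0) φ 0 q x = q * ∫ v in (0:ℝ)..φ, g v * v ^ x := by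
    intro x
    simp only [Phi, hgdef, zero_mul, add_zero]
  have hgi : ∀ x : ℕ, IntervalIntegrable (fun v => g v * v ^ x) volume 0 φ := fun x =>
    hg.mul_continuousOn (by fun_prop)
  have hdiff : ∀ k, Phi lam 0 p 0 (fun _ => 0) φ 0 q k - Phi lam 0 p 0 (fun _ => 0) φ 0 q (k + 1)
      = q * ∫ v in (0:ℝ)..φ, (g v * v ^ k - g v * v ^ (k + 1)) := by
    intro k
    rw [hPhi, hPhi, intervalIntegral.integral_sub (hgi _) (hgi _)]
    ring
  generalize Phi lam 0 p 0 (fun _ => 0) φ 0 q = F at *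
  have hpos : ∀ a, 0 < F a - F (a + 1) := by
    intro a
    rw [hdiff]
    apply mul_pos hq
    apply intervalIntegral.intervalIntegral_pos_of_pos_on ((hgi _).sub (hgi _)) _ hφ0
    intro v hv
    have h1 := hgpos v hv
    have h2 : 0 < v ^ a := pow_pos hv.1 a
    have h3 : 0 < 1 - v := by linarith [hv.2]
    have : 0 < g v * v ^ a * (1 - v) := by positivity
    calc 0 < g v * v ^ a * (1 - v) := this
      _ = _ := by ring
  have hanti : Antitone fun k => F k - F (k + 1) := by
    apply antitone_nat_of_succ_le
    intro k
    rw [hdiff, hdiff]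
    apply mul_le_mul_of_nonneg_left _ hq.le
    apply intervalIntegral.integral_mono_on_of_le_Ioo hφ0.le ((hgi _).sub (hgi _))
      ((hgi _).sub (hgi _))
    intro v hv
    have h1 := hgpos v hv
    have h2 : 0 < v ^ k := pow_pos hv.1 k
    have : 0 ≤ g v * v ^ k * (1 - v) ^ 2 := by positivity
    have h4 : g v * v ^ k * (1 - v) ^ 2 = (g v * v ^ k - g v * v ^ (k + 1)) -
      (g v * v ^ (k + 1) - g v * v ^ (k + 1 + 1)) := by ring
    linarith
  refine ⟨hpos, ?_⟩
  intro a x hxa f hf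
  have hD := hpos a
  have hind : ∀ m : ℕ, F (a + 1) - F (a + 1 + m) ≤ m * (F a - F (a + 1)) := by
    intro m
    induction m with
    | zero => simp
    | succ m ih =>
      have := hanti (show a ≤ a + 1 + m by omega)
      simp only at this
      push_cast
      rw [← add_assoc]
      linarith
  obtain ⟨m, hm⟩ : ∃ m, x + f = a + 1 + m := ⟨x + f - (a + 1), by omega⟩
  have hm' : (x : ℝ) + f = a + 1 + m := by exact_mod_cast hm
  rw [hm]
  have h5 : (F (a + 1) - F (a + 1 + m)) / (F a - F (a + 1)) ≤ m := by
    rw [div_le_iff₀ hD]; exact hind m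
  rw [sub_div] at h5
  linarith
end
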